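/- arXiv:1908.06398 — 14 statements merged into one kernel-verified Lean document; each statement's English description precedes it below -/
import Mathlib

section
/- Let α ≥ 1 be a real number, let a < b be reals, let u ∈ I_{α,[a,b]}, and let λ ∈ [0,1]. Then λ^α·u(a) + (1 − λ^α)·u(b) ≤ u(λ·a + (1−λ)·b). (Equivalently: the point mass at λa+(1−λ)b dominates, in the α,[a,b]-concave stochastic order, the two-point lottery giving a with probability λ^α and b with probability 1−λ^α.) -/
open MeasureTheory Set

noncomputable section

/-- A nonnegative function `v` on `[a,b]` is `α`-convex if `x ↦ (v x)^(1/α)` is convex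
on `[a,b]`. -/
def AlphaConvexOn (α a b : ℝ) (v : ℝ → ℝ) : Prop :=
  (∀ x ∈ Icc a b, 0 ≤ v x) ∧ ConvexOn ℝ (Icc a b) (fun x => v x ^ (1 / α))

/-- `u ∈ I_{α,[a,b]}`: `u` is bounded and measurable on `[a,b]`, weakly increasing on
`[a,b]`, and `x ↦ u b - u x` is `α`-convex on `[a,b]`. -/
def MemI (α a b : ℝ) (u : ℝ → ℝ) : Prop :=
  (∃ M, ∀ x ∈ Icc a b, |u x| ≤ M) ∧
  Measurable u ∧
  MonotoneOn u (Icc a b) ∧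
  AlphaConvexOn α a b (fun x => u b - u x)

/-- `F ⪰_{α,[a,b]-I} G`: the `α,[a,b]`-concave stochastic order. -/
def ConcaveOrder (α a b : ℝ) (F G : Measure ℝ) : Prop :=
  ∀ u : ℝ → ℝ, MemI α a b u → ∫ x, u x ∂G ≤ ∫ x, u x ∂F

/-- `F ⪰_{n,[a,b]-S} G`: the `n,[a,b]`-sufficient stochastic order. -/
def SuffOrder (n : ℕ) (a b : ℝ) (F G : Measure ℝ) : Prop :=
  ∀ c : Fin n → ℝ, (∀ i, c i ∈ Icc a b) →
    ∫ x, ∏ i, max (c i - x) 0 ∂F ≤ ∫ x, ∏ i, max (c i - x) 0 ∂G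

/-- The cumulative distribution function of a Borel measure on `ℝ`. -/
def cdfR (μ : Measure ℝ) (x : ℝ) : ℝ := (μ (Iic x)).toReal

theorem stmt_0 (α a b : ℝ) (hα : 1 ≤ α) (hab : a < b) (u : ℝ → ℝ)
    (hu : MemI α a b u) (l : ℝ) (hl : l ∈ Icc (0:ℝ) 1) :
    l ^ α * u a + (1 - l ^ α) * u b ≤ u (l * a + (1 - l) * b) := by
  obtain ⟨-, -, -, hpos, hconv⟩ := hu
  have hα0 : 0 < α := by linarith
  have ha : a ∈ Icc a b := ⟨le_refl a, hab.le⟩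
  have hb : b ∈ Icc a b := ⟨hab.le, le_refl b⟩
  have hl1 : 0 ≤ 1 - l := by linarith [hl.2]
  have hx : l * a + (1 - l) * b ∈ Icc a b := by
    constructor <;> nlinarith [hl.1, hl1]
  have h := hconv.2 ha hb hl.1 hl1 (by ring)
  have hz : (0:ℝ) ^ (1 / α) = 0 := Real.zero_rpow (by positivity)
  simp only [smul_eq_mul, sub_self, hz, mul_zero, add_zero] at h
  have hA := hpos a ha
  have hX := hpos _ hx
  simp only at hA hX
  have h2 := Real.rpow_le_rpow (Real.rpow_nonneg hX _) h hα0.le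
  rw [Real.mul_rpow hl.1 (Real.rpow_nonneg hA _), ← Real.rpow_mul hX, ← Real.rpow_mul hA,
    one_div_mul_cancel hα0.ne', Real.rpow_one, Real.rpow_one] at h2
  linarith
end
end

section
/- Let α ≥ 1 be a real number, let a < b be reals, and let u ∈ I_{α,[a,b]}. Let n be a positive integer, let λ₁,…,λₙ ∈ (0,1), and let p₁,…,pₙ ∈ (0,1) with p₁+⋯+pₙ = 1. Then ∑_{i=1}^n p_i·u(λ_i·a + (1−λ_i)·b) ≥ (∑_{i=1}^n p_i·λ_i^α)·u(a) + (1 − ∑_{i=1}^n p_i·λ_i^α)·u(b). -/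
open MeasureTheory Set

noncomputable section

theorem stmt_1 (α a b : ℝ) (hα : 1 ≤ α) (hab : a < b) (u : ℝ → ℝ) (hu : MemI α a b u)
    (n : ℕ) (hn : 0 < n) (l p : Fin n → ℝ)
    (hl : ∀ i, l i ∈ Ioo (0:ℝ) 1) (hp : ∀ i, p i ∈ Ioo (0:ℝ) 1)
    (hsum : ∑ i, p i = 1) :
    (∑ i, p i * l i ^ α) * u a + (1 - ∑ i, p i * l i ^ α) * u b ≤
      ∑ i, p i * u (l i * a + (1 - l i) * b) := by
  obtain ⟨-, -, -, hnn, hc⟩ := hu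
  have hα0 : 0 < α := by linarith
  have key : ∀ i, l i ^ α * u a + (1 - l i ^ α) * u b ≤ u (l i * a + (1 - l i) * b) := by
    intro i
    obtain ⟨h0, h1⟩ := hl i
    have ha : a ∈ Icc a b := ⟨le_refl _, hab.le⟩
    have hb : b ∈ Icc a b := ⟨hab.le, le_refl _⟩
    have hx : l i * a + (1 - l i) * b ∈ Icc a b := by
      constructor <;> nlinarith
    have h := hc.2 ha hb h0.le (by linarith : 0 ≤ 1 - l i) (by ring)
    have h1α : 1 / α ≠ 0 := by positivity
    simp only [smul_eq_mul, sub_self, Real.zero_rpow h1α, mul_zero, add_zero] at h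
    have hvx := hnn _ hx
    have hva := hnn _ ha
    simp only at hvx hva
    have h2 := Real.rpow_le_rpow (Real.rpow_nonneg hvx _) h hα0.le
    rw [Real.mul_rpow h0.le (Real.rpow_nonneg hva _), ← Real.rpow_mul hvx,
      ← Real.rpow_mul hva, one_div_mul_cancel hα0.ne', Real.rpow_one, Real.rpow_one] at h2
    linarith
  calc (∑ i, p i * l i ^ α) * u a + (1 - ∑ i, p i * l i ^ α) * u b
      = (∑ i, p i * l i ^ α) * u a + (∑ i, p i - ∑ i, p i * l i ^ α) * u b := by rw [hsum]
    _ = ∑ i, p i * (l i ^ α * u a + (1 - l i ^ α) * u b) := by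
        rw [← Finset.sum_sub_distrib, Finset.sum_mul, Finset.sum_mul, ← Finset.sum_add_distrib]
        exact Finset.sum_congr rfl fun i _ => by ring
    _ ≤ _ := Finset.sum_le_sum fun i _ => mul_le_mul_of_nonneg_left (key i) (hp i).1.le
end
end

section
/- Let α ≥ 1 be a real number, let a < b be reals, and let u ∈ I_{α,[a,b]} be (Lebesgue) integrable on [a,b]. Then (1/(b−a))·∫_a^b u(x) dx ≥ (1/(α+1))·u(a) + (α/(α+1))·u(b). (Equivalently: the uniform distribution on [a,b] dominates, in the α,[a,b]-concave stochastic order, the two-point lottery giving a with probability 1/(α+1) and b with probability α/(α+1).) -/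
open MeasureTheory Set

noncomputable section

theorem stmt_2 (α a b : ℝ) (hα : 1 ≤ α) (hab : a < b) (u : ℝ → ℝ)
    (hu : MemI α a b u) (hint : IntegrableOn u (Icc a b)) :
    (1 / (α + 1)) * u a + (α / (α + 1)) * u b ≤ (1 / (b - a)) * ∫ x in Icc a b, u x := by
  obtain ⟨_, _, _, hv0, hconv⟩ := hu
  have hL : 0 < b - a := sub_pos.2 hab
  have hα0 : 0 < α := by linarith
  have ha : a ∈ Icc a b := ⟨le_rfl, hab.le⟩
  have hb : b ∈ Icc a b := ⟨hab.le, le_rfl⟩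
  have key : ∀ x ∈ Icc a b,
      u b - (b / (b - a) - x / (b - a)) ^ α * (u b - u a) ≤ u x := by
    intro x hx
    have ht : 0 ≤ b / (b - a) - x / (b - a) := by
      rw [← sub_div]
      exact div_nonneg (sub_nonneg.2 hx.2) hL.le
    have hs : 0 ≤ (x - a) / (b - a) := div_nonneg (sub_nonneg.2 hx.1) hL.le
    have h := hconv.2 ha hb ht hs (by field_simp; ring)
    have hxe : (b / (b - a) - x / (b - a)) • a + ((x - a) / (b - a)) • b = x := by
      simp only [smul_eq_mul]
      field_simp
      ring
    rw [hxe] at h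
    have hz : (0 : ℝ) ^ (1 / α) = 0 := Real.zero_rpow (by positivity)
    simp only [sub_self, smul_eq_mul, hz, mul_zero, add_zero] at h
    have h1 := hv0 x hx
    have h2 := hv0 a ha
    have h3 := Real.rpow_le_rpow (Real.rpow_nonneg h1 _) h hα0.le
    rw [Real.mul_rpow ht (Real.rpow_nonneg h2 _), ← Real.rpow_mul h1, ← Real.rpow_mul h2,
      one_div_mul_cancel hα0.ne', Real.rpow_one, Real.rpow_one] at h3
    linarith
  have hcont : Continuous fun x : ℝ => (b / (b - a) - x / (b - a)) ^ α :=
    (by fun_prop : Continuous fun x : ℝ => b / (b - a) - x / (b - a)).rpow_const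
      (fun _ => Or.inr hα0.le)
  have hcont2 : Continuous fun x : ℝ =>
      u b - (b / (b - a) - x / (b - a)) ^ α * (u b - u a) := by fun_prop
  have hcont3 : Continuous fun x : ℝ =>
      (b / (b - a) - x / (b - a)) ^ α * (u b - u a) := by fun_prop
  have hle := setIntegral_mono_on (hcont2.integrableOn_Icc (μ := volume)) hint
    measurableSet_Icc key
  have hcalc : ∫ x in Icc a b, (u b - (b / (b - a) - x / (b - a)) ^ α * (u b - u a))
      = (b - a) * u b - (b - a) * (1 / (α + 1)) * (u b - u a) := by
    rw [integral_Icc_eq_integral_Ioc, ← intervalIntegral.integral_of_le hab.le,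
      intervalIntegral.integral_sub (continuous_const.intervalIntegrable _ _)
        (hcont3.intervalIntegrable _ _),
      intervalIntegral.integral_mul_const,
      intervalIntegral.integral_comp_sub_div (fun y => y ^ α) hL.ne', sub_self, ← sub_div,
      div_self hL.ne', integral_rpow (Or.inl (by linarith)),
      Real.one_rpow, Real.zero_rpow (by linarith)]
    simp
  rw [hcalc] at hle
  have h4 := mul_le_mul_of_nonneg_left hle (one_div_pos.2 hL).le
  refine le_trans (le_of_eq ?_) h4
  have : α + 1 ≠ 0 := by linarith
  field_simp
  ring
end
end

section
/- Let a < b be reals and let 1 ≤ α < β be real numbers. Then I_{β,[a,b]} ⊆ I_{α,[a,b]}; that is, every function u : [a,b] → ℝ that is bounded, measurable, weakly increasing, and such that x ↦ u(b) − u(x) is β-convex, is also such that x ↦ u(b) − u(x) is α-convex. Consequently, if F dominates G in the α,[a,b]-concave stochastic order, then F dominates G in the β,[a,b]-concave stochastic order. -/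
open MeasureTheory Set

noncomputable section

theorem stmt_3 (α β a b : ℝ) (hα : 1 ≤ α) (hαβ : α < β) (hab : a < b) :
    (∀ u : ℝ → ℝ, MemI β a b u → MemI α a b u) ∧
    (∀ F G : Measure ℝ, IsProbabilityMeasure F → IsProbabilityMeasure G →
      F (Icc a b)ᶜ = 0 → G (Icc a b)ᶜ = 0 →
      ConcaveOrder α a b F G → ConcaveOrder β a b F G) := by
  have key : ∀ u : ℝ → ℝ, MemI β a b u → MemI α a b u := by
    rintro u ⟨hM, hmeas, hmono, hnn, hconv⟩
    refine ⟨hM, hmeas, hmono, hnn, hconv.1, ?_⟩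
    intro x hx y hy s t hs ht hst
    have hα0 : 0 < α := by linarith
    have hβ0 : 0 < β := by linarith
    have hp : 1 ≤ β / α := by rw [le_div_iff₀ hα0]; linarith
    have hz := hconv.1 hx hy hs ht hst
    have h1 := hconv.2 hx hy hs ht hst
    have e : ∀ w ∈ Icc a b, (u b - u w) ^ (1 / α) = ((u b - u w) ^ (1 / β)) ^ (β / α) := by
      intro w hw
      rw [← Real.rpow_mul (hnn w hw)]
      congr 1
      field_simp
    have h2 := (convexOn_rpow hp).2
      (Set.mem_Ici.2 (Real.rpow_nonneg (hnn x hx) (1 / β)))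
      (Set.mem_Ici.2 (Real.rpow_nonneg (hnn y hy) (1 / β))) hs ht hst
    have h3 := Real.rpow_le_rpow (Real.rpow_nonneg (hnn _ hz) (1 / β)) h1
      (by linarith : 0 ≤ β / α)
    change (u b - u (s • x + t • y)) ^ (1 / α) ≤
      s • (u b - u x) ^ (1 / α) + t • (u b - u y) ^ (1 / α)
    rw [e _ hz, e _ hx, e _ hy]
    exact h3.trans h2
  exact ⟨key, fun F G _ _ _ _ h u hu => h u (key u hu)⟩
end
end

section
/- Let α > 1 be a real number, let a < b be reals, and let u ∈ I_{α,[a,b]} be twice differentiable on [a,b] with a continuous second derivative (one-sided derivatives at the endpoints). Then u'(b) = 0. -/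
open MeasureTheory Set

noncomputable section

theorem stmt_6 (α a b : ℝ) (hα : 1 < α) (hab : a < b) (u u' u'' : ℝ → ℝ)
    (hu : MemI α a b u)
    (hd1 : ∀ x ∈ Icc a b, HasDerivWithinAt u (u' x) (Icc a b) x)
    (hd2 : ∀ x ∈ Icc a b, HasDerivWithinAt u' (u'' x) (Icc a b) x)
    (hc : ContinuousOn u'' (Icc a b)) :
    u' b = 0 := by
  obtain ⟨-, -, hmono, hnn, hcv⟩ := hu
  have hbm : b ∈ Icc a b := right_mem_Icc.2 hab.le
  have ham : a ∈ Icc a b := left_mem_Icc.2 hab.le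
  have hα0 : 0 < α := by linarith
  have hL : 0 < b - a := by linarith
  have h1 := hasDerivWithinAt_iff_tendsto_slope.1 (hd1 b hbm)
  have hne : (nhdsWithin b (Icc a b \ {b})).NeBot := by
    rw [Icc_sdiff_right]
    exact right_nhdsWithin_Ico_neBot hab
  have key : ∀ x ∈ Icc a b, u b - u x ≤ ((b - x) / (b - a)) ^ α * (u b - u a) := by
    intro x hx
    have ht0 : 0 ≤ (b - x) / (b - a) := div_nonneg (by linarith [hx.2]) hL.le
    have ht1 : 0 ≤ (x - a) / (b - a) := div_nonneg (by linarith [hx.1]) hL.le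
    have h := hcv.2 ham hbm ht0 ht1 (by field_simp; ring)
    have hxe : ((b - x) / (b - a)) • a + ((x - a) / (b - a)) • b = x := by
      simp only [smul_eq_mul]; field_simp; ring
    rw [hxe] at h
    simp only [sub_self, smul_eq_mul] at h
    rw [Real.zero_rpow (by positivity), mul_zero, add_zero] at h
    have hvx : 0 ≤ u b - u x := hnn x hx
    have hva : 0 ≤ u b - u a := hnn a ham
    have h2 := Real.rpow_le_rpow (Real.rpow_nonneg hvx _) h hα0.le
    rw [Real.mul_rpow ht0 (Real.rpow_nonneg hva _), ← Real.rpow_mul hvx, ← Real.rpow_mul hva,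
      one_div_mul_cancel hα0.ne', Real.rpow_one, Real.rpow_one] at h2
    exact h2
  have hlim : Filter.Tendsto (fun x => ((b - x) / (b - a)) ^ (α - 1) * ((u b - u a) / (b - a)))
      (nhdsWithin b (Icc a b \ {b})) (nhds 0) := by
    have hcont : Continuous
        (fun x => ((b - x) / (b - a)) ^ (α - 1) * ((u b - u a) / (b - a))) := by
      refine Continuous.mul ?_ continuous_const
      exact Continuous.rpow_const (by fun_prop) (fun x => Or.inr (by linarith))
    have h := (hcont.tendsto b).mono_left
      (nhdsWithin_le_nhds (s := Icc a b \ {b}))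
    simpa [Real.zero_rpow (by linarith : α - 1 ≠ 0)] using h
  have hslope : ∀ x, slope u b x = (u b - u x) / (b - x) := by
    intro x
    rw [slope_comm, slope_def_field]
  refine le_antisymm ?_ ?_
  · refine le_of_tendsto_of_tendsto h1 hlim ?_
    filter_upwards [self_mem_nhdsWithin] with x hx
    have hxb : 0 < b - x := by
      have := lt_of_le_of_ne hx.1.2 hx.2
      linarith
    rw [hslope, div_le_iff₀ hxb]
    refine (key x hx.1).trans (le_of_eq ?_)
    have hp : 0 < (b - x) / (b - a) := div_pos hxb hL
    rw [Real.rpow_sub_one hp.ne']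
    field_simp
  · refine ge_of_tendsto h1 ?_
    filter_upwards [self_mem_nhdsWithin] with x hx
    rw [hslope]
    exact div_nonneg (hnn x hx.1) (by linarith [hx.1.2])
end
end

section
/- Let a < b be reals and let F and G be Borel probability measures on [a,b], with cumulative distribution functions also denoted F and G. Then F ⪰_{2,[a,b]-S} G if and only if for every c ∈ [a,b] the following two inequalities hold: (1) (b−c)·[∫_a^c F(x)dx − ∫_a^c G(x)dx] + 2·∫_a^c (∫_a^x F(z)dz − ∫_a^x G(z)dz) dx ≤ 0; and (2) ∫_a^c (∫_a^x F(z)dz − ∫_a^x G(z)dz) dx ≤ 0. -/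
open MeasureTheory Set

noncomputable section

theorem swapAux (a c : ℝ) (hc : a ≤ c) (F : Measure ℝ) [IsProbabilityMeasure F]
    (f : ℝ → ℝ → ℝ) (hm : Measurable (Function.uncurry f)) (M : ℝ)
    (hb : ∀ t ∈ Ioc a c, ∀ᵐ x ∂F, |f t x| ≤ M) :
    ∫ t in a..c, ∫ x, f t x ∂F = ∫ x, (∫ t in a..c, f t x) ∂F := by
  simp only [intervalIntegral.integral_of_le hc]
  apply MeasureTheory.integral_integral_swap
  refine Integrable.of_bound hm.aestronglyMeasurable M ?_
  rw [Measure.ae_prod_iff_ae_ae]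
  · filter_upwards [ae_restrict_mem measurableSet_Ioc] with t ht
    simpa [Function.uncurry] using hb t ht
  · exact measurableSet_le hm.norm measurable_const

theorem aeMem (a b : ℝ) (F : Measure ℝ) (hF : F (Icc a b)ᶜ = 0) :
    ∀ᵐ x ∂F, x ∈ Icc a b := hF

theorem pt1 (a c x : ℝ) (hc : a ≤ c) (hx : a ≤ x) :
    ∫ t in a..c, (Ici x).indicator (fun _ => (1:ℝ)) t = max (c - x) 0 := by
  rw [intervalIntegral.integral_of_le hc]
  have : (Ici x).indicator (fun _ => (1:ℝ)) =ᵐ[volume.restrict (Ioc a c)]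
      (Ioi x).indicator (fun _ => (1:ℝ)) :=
    ae_restrict_of_ae (indicator_ae_eq_of_ae_eq_set Ioi_ae_eq_Ici.symm)
  rw [integral_congr_ae this, setIntegral_indicator measurableSet_Ioi, Ioc_inter_Ioi,
    max_eq_right hx]
  simp

theorem pt2 (a c x : ℝ) (hc : a ≤ c) (hx : a ≤ x) :
    ∫ t in a..c, max (t - x) 0 = max (c - x) 0 ^ 2 / 2 := by
  have hz : ∀ d, a ≤ d → d ≤ x → ∫ t in a..d, max (t - x) 0 = 0 := by
    intro d hd hdx
    rw [intervalIntegral.integral_congr (g := fun _ => (0:ℝ))]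
    · simp
    · intro t ht
      rw [uIcc_of_le hd] at ht
      simp only [max_eq_right_iff]
      linarith [ht.2]
  rcases le_total c x with h | h
  · rw [hz c hc h, max_eq_right (by linarith)]; simp
  · have hi : ∀ p q : ℝ, IntervalIntegrable (fun t => max (t - x) 0) volume p q :=
      fun p q => Continuous.intervalIntegrable (by fun_prop) _ _
    rw [← intervalIntegral.integral_add_adjacent_intervals (hi a x) (hi x c), hz x hx le_rfl,
      intervalIntegral.integral_congr (g := fun t => t - x)]
    · rw [max_eq_left (by linarith)]
      simp
      ring
    · intro t ht
      rw [uIcc_of_le h] at ht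
      simp only [max_eq_left_iff]
      linarith [ht.1]

theorem H1 (a b c : ℝ) (F : Measure ℝ) [IsProbabilityMeasure F] (hF : F (Icc a b)ᶜ = 0)
    (hc : a ≤ c) : ∫ x in a..c, cdfR F x = ∫ x, max (c - x) 0 ∂F := by
  have h1 : ∀ t, cdfR F t = ∫ x, (Ici x).indicator (fun _ => (1:ℝ)) t ∂F := by
    intro t
    have : (fun x => (Ici x).indicator (fun _ => (1:ℝ)) t) = (Iic t).indicator 1 := by
      ext x; simp [indicator_apply]
    rw [this, integral_indicator_one measurableSet_Iic]
    rfl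
  simp only [h1]
  rw [swapAux a c hc F (fun t x => (Ici x).indicator (fun _ => (1:ℝ)) t) ?_ 1 ?_]
  · apply integral_congr_ae
    filter_upwards [aeMem a b F hF] with x hx
    exact pt1 a c x hc hx.1
  · have : (Function.uncurry fun t x : ℝ => (Ici x).indicator (fun _ => (1:ℝ)) t) =
        {p : ℝ × ℝ | p.2 ≤ p.1}.indicator 1 := by
      ext p; simp [indicator_apply, Function.uncurry]
    rw [this]
    exact measurable_one.indicator (measurableSet_le measurable_snd measurable_fst)
  · intro t _
    refine Filter.Eventually.of_forall fun x => ?_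
    simp only [indicator_apply]
    split_ifs <;> simp

theorem H2 (a b c : ℝ) (F : Measure ℝ) [IsProbabilityMeasure F] (hF : F (Icc a b)ᶜ = 0)
    (hc : a ≤ c) : 2 * ∫ t in a..c, (∫ z in a..t, cdfR F z) = ∫ x, max (c - x) 0 ^ 2 ∂F := by
  rw [intervalIntegral.integral_congr (g := fun t => ∫ x, max (t - x) 0 ∂F),
    swapAux a c hc F (fun t x => max (t - x) 0) ?_ (c - a) ?_, ← integral_const_mul]
  · apply integral_congr_ae
    filter_upwards [aeMem a b F hF] with x hx
    simp only [pt2 a c x hc hx.1]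
    ring
  · simp only [Function.uncurry_def]; fun_prop
  · intro t ht
    filter_upwards [aeMem a b F hF] with x hx
    rw [abs_of_nonneg (le_max_right _ _)]
    apply max_le <;> linarith [ht.1, ht.2, hx.1]
  · intro t ht
    rw [uIcc_of_le hc] at ht
    exact H1 a b t F hF ht.1

theorem intH (a b c : ℝ) (F : Measure ℝ) [IsProbabilityMeasure F] (hF : F (Icc a b)ᶜ = 0)
    (n : ℕ) : Integrable (fun x => max (c - x) 0 ^ n) F := by
  refine Integrable.of_bound (by fun_prop) (max (c - a) 0 ^ n) ?_
  filter_upwards [aeMem a b F hF] with x hx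
  rw [Real.norm_of_nonneg (by positivity)]
  gcongr
  exact hx.1

theorem key (a b c d : ℝ) (F : Measure ℝ) [IsProbabilityMeasure F] (hF : F (Icc a b)ᶜ = 0)
    (hc : a ≤ c) (hd : c ≤ d) : ∫ x, max (c - x) 0 * max (d - x) 0 ∂F =
      (d - c) * (∫ x in a..c, cdfR F x) + 2 * ∫ t in a..c, (∫ z in a..t, cdfR F z) := by
  rw [H1 a b c F hF hc, H2 a b c F hF hc, ← integral_const_mul, ← integral_add]
  · congr 1
    ext x
    rcases le_total c x with h | h
    · simp [max_eq_right (show c - x ≤ 0 by linarith)]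
    · rw [max_eq_left (show 0 ≤ c - x by linarith), max_eq_left (show 0 ≤ d - x by linarith)]
      ring
  · simpa using (intH a b c F hF 1).const_mul (d - c)
  · exact intH a b c F hF 2

theorem iiH (a c : ℝ) (F : Measure ℝ) [IsProbabilityMeasure F] :
    IntervalIntegrable (fun t => ∫ z in a..t, cdfR F z) volume a c := by
  apply Continuous.intervalIntegrable
  apply intervalIntegral.continuous_primitive
  intro p q
  apply Monotone.intervalIntegrable
  intro x y h
  exact ENNReal.toReal_mono (measure_ne_top _ _) (measure_mono (Iic_subset_Iic.2 h))

theorem stmt_9 (a b : ℝ) (hab : a < b)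
    (F G : Measure ℝ) [IsProbabilityMeasure F] [IsProbabilityMeasure G]
    (hF : F (Icc a b)ᶜ = 0) (hG : G (Icc a b)ᶜ = 0) :
    SuffOrder 2 a b F G ↔
      ∀ c ∈ Icc a b,
        (b - c) * ((∫ x in a..c, cdfR F x) - ∫ x in a..c, cdfR G x) +
            2 * ∫ x in a..c, ((∫ z in a..x, cdfR F z) - ∫ z in a..x, cdfR G z) ≤ 0 ∧
        (∫ x in a..c, ((∫ z in a..x, cdfR F z) - ∫ z in a..x, cdfR G z)) ≤ 0 := by
  have hsub : ∀ c, (∫ x in a..c, ((∫ z in a..x, cdfR F z) - ∫ z in a..x, cdfR G z)) =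
      (∫ x in a..c, (∫ z in a..x, cdfR F z)) - ∫ x in a..c, (∫ z in a..x, cdfR G z) :=
    fun c => intervalIntegral.integral_sub (iiH a c F) (iiH a c G)
  simp only [hsub]
  unfold SuffOrder
  simp only [Fin.prod_univ_two]
  constructor
  · intro h c hc
    have hbb : b ∈ Icc a b := ⟨hab.le, le_rfl⟩
    have h1 := h ![c, b] (by intro i; fin_cases i; exacts [hc, hbb])
    have h2 := h ![c, c] (by intro i; fin_cases i; exacts [hc, hc])
    simp only [Matrix.cons_val_zero, Matrix.cons_val_one] at h1 h2
    rw [key a b c b F hF hc.1 hc.2, key a b c b G hG hc.1 hc.2] at h1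
    rw [key a b c c F hF hc.1 le_rfl, key a b c c G hG hc.1 le_rfl] at h2
    constructor <;> linarith
  · intro h
    have main : ∀ c d, c ∈ Icc a b → d ∈ Icc a b → c ≤ d →
        ∫ x, max (c - x) 0 * max (d - x) 0 ∂F ≤ ∫ x, max (c - x) 0 * max (d - x) 0 ∂G := by
      intro c d hc hd hcd
      rw [key a b c d F hF hc.1 hcd, key a b c d G hG hc.1 hcd]
      obtain ⟨h1, h2⟩ := h c hc
      generalize (∫ x in a..c, cdfR F x) = A at *
      generalize (∫ x in a..c, cdfR G x) = B at *
      generalize (∫ x in a..c, (∫ z in a..x, cdfR F z)) = P at *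
      generalize (∫ x in a..c, (∫ z in a..x, cdfR G z)) = Q at *
      have hdb := hd.2
      rcases le_total (A - B) 0 with h0 | h0
      · nlinarith
      · nlinarith
    intro c hc
    rcases le_total (c 0) (c 1) with h0 | h0
    · exact main _ _ (hc 0) (hc 1) h0
    · have := main _ _ (hc 1) (hc 0) h0
      simpa only [mul_comm] using this
end
end

section
/- Let a < b be reals and let F and G be Borel probability measures on [a,b], with cumulative distribution functions also denoted F and G. For c ∈ [a,b], let condition (1) be: (b−c)·[∫_a^c F(x)dx − ∫_a^c G(x)dx] + 2·∫_a^c (∫_a^x F(z)dz − ∫_a^x G(z)dz) dx ≤ 0, and condition (2) be: ∫_a^c (∫_a^x F(z)dz − ∫_a^x G(z)dz) dx ≤ 0. Suppose that the implication holds: if condition (2) holds for all c ∈ [a,b] then condition (1) holds for all c ∈ [a,b]. Then: condition (2) holds for all c ∈ [a,b] if and only if F ⪰_{2,[a,b]-I} G. -/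
open MeasureTheory Set

noncomputable section

lemma aux_supp {a b : ℝ} {μ : Measure ℝ} (h : μ (Icc a b)ᶜ = 0) : ∀ᵐ x ∂μ, x ∈ Icc a b := by
  rw [ae_iff]; exact h

lemma aux_cdf_mono (μ : Measure ℝ) [IsProbabilityMeasure μ] : Monotone (cdfR μ) := by
  intro x y hxy
  exact ENNReal.toReal_mono (measure_ne_top _ _) (measure_mono (Iic_subset_Iic.2 hxy))

/-- swap -/
lemma aux_swap (μ : Measure ℝ) [IsProbabilityMeasure μ] (a c C : ℝ) (f : ℝ → ℝ → ℝ)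
    (hf : Measurable (Function.uncurry f)) (hC : ∀ x ∈ Ioc a c, ∀ᵐ z ∂μ, |f x z| ≤ C) (hac : a ≤ c) :
    ∫ x in a..c, ∫ z, f x z ∂μ = ∫ z, (∫ x in a..c, f x z) ∂μ := by
  rw [intervalIntegral.integral_of_le hac]
  simp_rw [intervalIntegral.integral_of_le hac]
  apply integral_integral_swap
  refine Integrable.of_bound (C := C) hf.aestronglyMeasurable ?_
  have hm : MeasurableSet {p : ℝ × ℝ | ‖Function.uncurry f p‖ ≤ C} :=
    measurableSet_le hf.norm measurable_const
  refine (Measure.ae_prod_iff_ae_ae hm).2 ?_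
  refine (ae_restrict_iff' measurableSet_Ioc).2 (Filter.Eventually.of_forall ?_)
  intro x hx
  exact hC x hx

lemma aux_A (a b : ℝ) (μ : Measure ℝ) [IsProbabilityMeasure μ] (hμ : μ (Icc a b)ᶜ = 0)
    (c : ℝ) (hc : a ≤ c) : ∫ x in a..c, cdfR μ x = ∫ z, max (c - z) 0 ∂μ := by
  have h1 : ∀ x, cdfR μ x = ∫ z, (if z ≤ x then (1:ℝ) else 0) ∂μ := by
    intro x
    have : (fun z => if z ≤ x then (1:ℝ) else 0) = (Iic x).indicator (fun _ => (1:ℝ)) := by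
      ext z; simp [indicator]
    rw [this, integral_indicator measurableSet_Iic]
    simp [cdfR, Measure.real]
  simp_rw [h1]
  rw [aux_swap μ a c 1 (fun x z => if z ≤ x then (1:ℝ) else 0) _ _ hc]
  · apply integral_congr_ae
    filter_upwards [aux_supp hμ] with z hz
    rcases le_total z c with h | h
    · rw [max_eq_left (by linarith)]
      rw [intervalIntegral.integral_of_le hc]
      have : (fun x => if z ≤ x then (1:ℝ) else 0) = (Ici z).indicator (fun _ => (1:ℝ)) := by
        ext x; simp [indicator]
      rw [this, ← integral_Icc_eq_integral_Ioc, setIntegral_indicator measurableSet_Ici]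
      have h2 : Icc a c ∩ Ici z = Icc z c := by
        ext x; simp only [mem_inter_iff, mem_Icc, mem_Ici]
        constructor
        · rintro ⟨⟨_, h1⟩, h2⟩; exact ⟨h2, h1⟩
        · rintro ⟨h1, h2⟩; exact ⟨⟨hz.1.trans h1, h2⟩, h1⟩
      rw [h2]; simp [h]
    · rw [max_eq_right (by linarith), intervalIntegral.integral_of_le hc,
        integral_Ioc_eq_integral_Ioo]
      rw [setIntegral_congr_fun (g := fun _ => (0:ℝ)) measurableSet_Ioo]
      · simp
      · intro x hx
        have : ¬ z ≤ x := by have := hx.2; linarith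
        simp [this]
  · exact Measurable.ite (measurableSet_le measurable_snd measurable_fst) measurable_const measurable_const
  · intro x _
    refine Filter.Eventually.of_forall fun z => ?_
    split_ifs <;> simp

lemma aux_B (a b : ℝ) (μ : Measure ℝ) [IsProbabilityMeasure μ] (hμ : μ (Icc a b)ᶜ = 0)
    (c : ℝ) (hc : a ≤ c) : ∫ x in a..c, ∫ z in a..x, cdfR μ z = ∫ z, max (c - z) 0 ^ 2 / 2 ∂μ := by
  have h1 : ∫ x in a..c, ∫ z in a..x, cdfR μ z = ∫ x in a..c, ∫ z, max (x - z) 0 ∂μ := by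
    apply intervalIntegral.integral_congr
    intro x hx
    rw [uIcc_of_le hc] at hx
    exact aux_A a b μ hμ x hx.1
  rw [h1, aux_swap μ a c (c - a) (fun x z => max (x - z) 0) _ _ hc]
  · apply integral_congr_ae
    filter_upwards [aux_supp hμ] with z hz
    have hd : ∀ x ∈ uIcc a c, HasDerivAt (fun x => max (x - z) 0 ^ 2 / 2) (max (x - z) 0) x := by
      intro x _
      rcases lt_trichotomy x z with h | h | h
      · rw [max_eq_right (by linarith)]
        refine (hasDerivAt_const x (0:ℝ)).congr_of_eventuallyEq ?_
        filter_upwards [Iio_mem_nhds h] with y hy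
        rw [max_eq_right (by linarith [mem_Iio.1 hy])]; simp
      · subst h
        simp only [sub_self, max_self]
        rw [hasDerivAt_iff_isLittleO]
        simp only [sub_self, max_self, smul_zero, sub_zero]
        have : (fun y : ℝ => max (y - x) 0 ^ 2 / 2 - 0 ^ 2 / 2) =O[nhds x] fun y => (y - x) ^ 2 := by
          refine Asymptotics.IsBigO.of_bound 1 (Filter.Eventually.of_forall fun y => ?_)
          rw [Real.norm_eq_abs, Real.norm_eq_abs, abs_of_nonneg (sq_nonneg (y - x)),
            abs_of_nonneg (by have := sq_nonneg (max (y - x) 0); linarith)]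
          rcases le_total (y - x) 0 with h | h
          · rw [max_eq_right h]; nlinarith
          · rw [max_eq_left h]; nlinarith
        refine this.trans_isLittleO ?_
        have h6 := Asymptotics.isLittleO_pow_sub_sub x (by norm_num : 1 < 2)
        simpa only [Real.norm_eq_abs, sq_abs] using h6
      · rw [max_eq_left (by linarith)]
        have : HasDerivAt (fun x : ℝ => (x - z) ^ 2 / 2) (x - z) x := by
          have := ((((hasDerivAt_id x).sub_const z).pow 2).div_const 2)
          have e9 : ((2:ℕ):ℝ) * (id x - z) ^ (2 - 1) * 1 / 2 = x - z := by
            simp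
          rw [e9] at this
          exact this
        refine this.congr_of_eventuallyEq ?_
        filter_upwards [Ioi_mem_nhds h] with y hy
        rw [max_eq_left (by linarith [mem_Ioi.1 hy])]
    rw [intervalIntegral.integral_eq_sub_of_hasDerivAt hd]
    · rw [max_eq_right (a := a - z) (by linarith [hz.1])]; simp
    · exact (by fun_prop : Continuous fun x : ℝ => max (x - z) 0).intervalIntegrable _ _
  · simp only [Function.uncurry_def]; fun_prop
  · intro x hx
    filter_upwards [aux_supp hμ] with z hz
    rw [abs_of_nonneg (le_max_right _ _)]
    exact max_le (by linarith [hz.1, hx.2]) (by linarith)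

lemma aux_int {a b : ℝ} {μ : Measure ℝ} [IsProbabilityMeasure μ] (hμ : μ (Icc a b)ᶜ = 0)
    {f : ℝ → ℝ} (hf : Continuous f) : Integrable f μ := by
  obtain ⟨C, hC⟩ := (isCompact_Icc (a := a) (b := b)).exists_bound_of_continuousOn hf.continuousOn
  refine Integrable.of_bound (C := C) hf.aestronglyMeasurable ?_
  filter_upwards [aux_supp hμ] with z hz using hC z hz

lemma aux_D3 (a b : ℝ) (F G : Measure ℝ) [IsProbabilityMeasure F] [IsProbabilityMeasure G]
    (hF : F (Icc a b)ᶜ = 0) (hG : G (Icc a b)ᶜ = 0) (c : ℝ) (hc : a ≤ c) :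
    (∫ x in a..c, ((∫ z in a..x, cdfR F z) - ∫ z in a..x, cdfR G z)) =
      (∫ z, max (c - z) 0 ^ 2 ∂F) / 2 - (∫ z, max (c - z) 0 ^ 2 ∂G) / 2 := by
  rw [intervalIntegral.integral_sub, aux_B a b F hF c hc, aux_B a b G hG c hc, integral_div,
    integral_div]
  · exact (intervalIntegral.continuous_primitive
      (fun x y => (aux_cdf_mono F).intervalIntegrable) a).intervalIntegrable _ _
  · exact (intervalIntegral.continuous_primitive
      (fun x y => (aux_cdf_mono G).intervalIntegrable) a).intervalIntegrable _ _

lemma aux_K_le (a b : ℝ) (F G : Measure ℝ) [IsProbabilityMeasure F] [IsProbabilityMeasure G]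
    (hF : F (Icc a b)ᶜ = 0) (hG : G (Icc a b)ᶜ = 0)
    (h2 : ∀ c ∈ Icc a b,
        (∫ x in a..c, ((∫ z in a..x, cdfR F z) - ∫ z in a..x, cdfR G z)) ≤ 0)
    (h1 : ∀ c ∈ Icc a b,
        (b - c) * ((∫ x in a..c, cdfR F x) - ∫ x in a..c, cdfR G x) +
          2 * ∫ x in a..c, ((∫ z in a..x, cdfR F z) - ∫ z in a..x, cdfR G z) ≤ 0)
    (c d : ℝ) (hc : c ∈ Icc a b) (hd : d ∈ Icc a b) (hcd : c ≤ d) :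
    ∫ x, max (c - x) 0 * max (d - x) 0 ∂F ≤ ∫ x, max (c - x) 0 * max (d - x) 0 ∂G := by
  have key : ∀ (μ : Measure ℝ) [IsProbabilityMeasure μ], μ (Icc a b)ᶜ = 0 →
      ∫ x, max (c - x) 0 * max (d - x) 0 ∂μ =
        (∫ z, max (c - z) 0 ^ 2 ∂μ) + (d - c) * ∫ z, max (c - z) 0 ∂μ := by
    intro μ _ hμ
    rw [← integral_const_mul, ← integral_add]
    · congr 1; ext x
      rcases le_total c x with h | h
      · rw [max_eq_right (by linarith : c - x ≤ 0)]; simp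
      · rw [max_eq_left (by linarith : 0 ≤ c - x), max_eq_left (by linarith : 0 ≤ d - x)]; ring
    · exact aux_int hμ (by fun_prop)
    · exact aux_int hμ (by fun_prop)
  have h2c := h2 c hc
  have h1c := h1 c hc
  rw [aux_D3 a b F G hF hG c hc.1] at h2c h1c
  rw [aux_A a b F hF c hc.1, aux_A a b G hG c hc.1] at h1c
  rw [key F hF, key G hG]
  set X := ∫ z, max (c - z) 0 ^ 2 ∂F
  set Y := ∫ z, max (c - z) 0 ^ 2 ∂G
  set P := ∫ z, max (c - z) 0 ∂F
  set Q := ∫ z, max (c - z) 0 ∂G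
  rcases le_total P Q with h | h
  · nlinarith [mul_nonneg (sub_nonneg.2 hcd) (sub_nonneg.2 h)]
  · nlinarith [mul_nonneg (sub_nonneg.2 hd.2) (sub_nonneg.2 h)]

/-- quadratic form inequality -/
lemma aux_sum_le (a b : ℝ) (F G : Measure ℝ) [IsProbabilityMeasure F] [IsProbabilityMeasure G]
    (hF : F (Icc a b)ᶜ = 0) (hG : G (Icc a b)ᶜ = 0)
    (hK : ∀ c d : ℝ, c ∈ Icc a b → d ∈ Icc a b → 
      ∫ x, max (c - x) 0 * max (d - x) 0 ∂F ≤ ∫ x, max (c - x) 0 * max (d - x) 0 ∂G)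
    (n : ℕ) (w t : ℕ → ℝ) (hw : ∀ i < n, 0 ≤ w i) (ht : ∀ i < n, t i ∈ Icc a b) :
    ∫ x, (∑ i ∈ Finset.range n, w i * max (t i - x) 0) ^ 2 ∂F ≤
      ∫ x, (∑ i ∈ Finset.range n, w i * max (t i - x) 0) ^ 2 ∂G := by
  have key : ∀ (μ : Measure ℝ) [IsProbabilityMeasure μ], μ (Icc a b)ᶜ = 0 →
      ∫ x, (∑ i ∈ Finset.range n, w i * max (t i - x) 0) ^ 2 ∂μ =
        ∑ i ∈ Finset.range n, ∑ j ∈ Finset.range n, 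
          (w i * w j) * ∫ x, max (t i - x) 0 * max (t j - x) 0 ∂μ := by
    intro μ _ hμ
    simp_rw [sq, Finset.sum_mul_sum]
    rw [integral_finsetSum]
    · refine Finset.sum_congr rfl fun i _ => ?_
      rw [integral_finsetSum]
      · refine Finset.sum_congr rfl fun j _ => ?_
        rw [← integral_const_mul]
        congr 1; ext x; ring
      · intro j _; exact aux_int hμ (by fun_prop)
    · intro j _; exact aux_int hμ (by fun_prop)
  rw [key F hF, key G hG]
  refine Finset.sum_le_sum fun i hi => Finset.sum_le_sum fun j hj => ?_
  have hi := Finset.mem_range.1 hi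
  have hj := Finset.mem_range.1 hj
  exact mul_le_mul_of_nonneg_left (hK _ _ (ht i hi) (ht j hj)) (mul_nonneg (hw i hi) (hw j hj))

/-- interpolation of a convex decreasing function vanishing at `b` -/
lemma aux_interp (a b : ℝ) (hab : a < b) (g : ℝ → ℝ) (hg : ConvexOn ℝ (Icc a b) g)
    (hanti : AntitoneOn g (Icc a b)) (hgb : g b = 0) (n : ℕ) (hn : 0 < n) :
    ∃ w t : ℕ → ℝ, (∀ i < n, 0 ≤ w i) ∧ (∀ i < n, t i ∈ Icc a b) ∧
      ∀ k ≤ n, ∑ i ∈ Finset.range n, w i * max (t i - (a + k * ((b - a) / n))) 0 =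
        g (a + k * ((b - a) / n)) := by
  have hn' : (0:ℝ) < n := by exact_mod_cast hn
  set δ : ℝ := (b - a) / n with hδ
  have hδ0 : 0 < δ := div_pos (by linarith) hn'
  have hnδ : a + n * δ = b := by rw [hδ]; field_simp; ring
  set X : ℕ → ℝ := fun i => a + i * δ with hX
  have hXmem : ∀ i ≤ n, X i ∈ Icc a b := by
    intro i hi
    have : (i:ℝ) ≤ n := by exact_mod_cast hi
    constructor
    · simp only [hX]; nlinarith [(Nat.cast_nonneg i : (0:ℝ) ≤ i)]
    · simp only [hX]; nlinarith
  have hXn : X n = b := hnδ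
  set p : ℕ → ℝ := fun i => if i < n then (g (X i) - g (X (i+1))) / δ else 0 with hp
  have hp0 : ∀ i, 0 ≤ p i := by
    intro i
    simp only [hp]
    split_ifs with h
    · refine div_nonneg (sub_nonneg.2 (hanti (hXmem i h.le) (hXmem (i+1) h) ?_)) hδ0.le
      simp only [hX]; push_cast; nlinarith
    · exact le_rfl
  refine ⟨fun i => p i - p (i+1), fun i => X (i+1), ?_, ?_, ?_⟩
  · intro i hi
    by_cases h : i + 1 < n
    · simp only [hp, hi, h, if_true, ← sub_div]
      refine div_nonneg ?_ hδ0.le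
      have h3 := hg.2 (hXmem i hi.le) (hXmem (i+1+1) h) (by norm_num : (0:ℝ) ≤ 1/2)
        (by norm_num : (0:ℝ) ≤ 1/2) (by norm_num)
      have h4 : (1/2:ℝ) • X i + (1/2:ℝ) • X (i+1+1) = X (i+1) := by
        simp only [hX, smul_eq_mul]; push_cast; ring
      rw [h4] at h3
      simp only [smul_eq_mul] at h3
      linarith
    · have : p (i+1) = 0 := by simp [hp, h]
      simp only [this, sub_zero]; exact hp0 i
  · intro i hi; exact hXmem _ hi
  · intro k hk
    change ∑ i ∈ Finset.range n, (p i - p (i+1)) * max (X (i+1) - X k) 0 = g (X k)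
    have habel : ∀ m : ℕ, ∑ i ∈ Finset.range m, (p i - p (i+1)) * max (X (i+1) - X k) 0
        = ∑ i ∈ Finset.range m, p i * (max (X (i+1) - X k) 0 - max (X i - X k) 0)
          - p m * max (X m - X k) 0 := by
      intro m
      induction m with
      | zero =>
        have : X 0 - X k ≤ 0 := by
          simp only [hX]; push_cast; nlinarith [(Nat.cast_nonneg k : (0:ℝ) ≤ k)]
        simp [max_eq_right this]
      | succ m ih => rw [Finset.sum_range_succ, Finset.sum_range_succ, ih]; ring
    have htel : ∀ m ≤ n, ∑ i ∈ Finset.range m, p i * (max (X (i+1) - X k) 0 - max (X i - X k) 0)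
        = g (X k) - g (X (max k m)) := by
      intro m
      induction m with
      | zero => simp
      | succ m ih =>
        intro hm
        rw [Finset.sum_range_succ, ih (by omega)]
        by_cases h : k ≤ m
        · rw [max_eq_right h, max_eq_right (by omega : k ≤ m + 1)]
          have hkm : (k:ℝ) ≤ m := by exact_mod_cast h
          have e1 : max (X (m+1) - X k) 0 = X (m+1) - X k := by
            apply max_eq_left; simp only [hX]; push_cast; nlinarith
          have e2 : max (X m - X k) 0 = X m - X k := by
            apply max_eq_left; simp only [hX]; nlinarith
          have e3 : X (m+1) - X k - (X m - X k) = δ := by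
            simp only [hX]; push_cast; ring
          have e4 : p m = (g (X m) - g (X (m+1))) / δ := by
            simp only [hp]; rw [if_pos (by omega)]
          rw [e1, e2, e3, e4]; field_simp; ring
        · have hkm : (m:ℝ) + 1 ≤ k := by exact_mod_cast (by omega : m + 1 ≤ k)
          rw [max_eq_left (by omega : m ≤ k), max_eq_left (by omega : m + 1 ≤ k)]
          have e1 : max (X (m+1) - X k) 0 = 0 := by
            apply max_eq_right; simp only [hX]; push_cast; nlinarith
          have e2 : max (X m - X k) 0 = 0 := by
            apply max_eq_right; simp only [hX]; nlinarith
          rw [e1, e2]; ring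
    rw [habel, htel n le_rfl, max_eq_right hk, hXn, hgb]
    have : p n = 0 := by simp [hp]
    rw [this]; ring

lemma aux_approx (a b : ℝ) (hab : a < b) (g : ℝ → ℝ) (hg : ConvexOn ℝ (Icc a b) g)
    (hanti : AntitoneOn g (Icc a b)) (hgb : g b = 0) (H : ℕ → ℝ → ℝ)
    (hH : ∀ n, Antitone (H n)) 
    (hgrid : ∀ n : ℕ, ∀ k ≤ n + 1, H n (a + k * ((b - a) / (n + 1 : ℕ))) =
      g (a + k * ((b - a) / (n + 1 : ℕ)))) :
    (∀ n, ∀ x ∈ Icc a b, 0 ≤ H n x ∧ H n x ≤ g a) ∧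
    ∀ x ∈ Icc a b, Filter.Tendsto (fun n => H n x) Filter.atTop (nhds (g x)) := by
  have hHa : ∀ n, H n a = g a := by
    intro n; have := hgrid n 0 (by omega); simpa using this
  have hHb : ∀ n, H n b = g b := by
    intro n
    have := hgrid n (n+1) le_rfl
    have e : a + ((n+1 : ℕ):ℝ) * ((b - a) / (n + 1 : ℕ)) = b := by
      have : ((n+1 : ℕ):ℝ) ≠ 0 := by positivity
      field_simp; ring
    rwa [e] at this
  refine ⟨fun n x hx => ⟨?_, ?_⟩, fun x hx => ?_⟩
  · rw [← hgb, ← hHb n]; exact hH n hx.2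
  · rw [← hHa n]; exact hH n hx.1
  · rcases eq_or_lt_of_le hx.1 with h | hax
    · subst h; simp only [hHa]; exact tendsto_const_nhds
    rcases eq_or_lt_of_le hx.2 with h | hxb
    · subst h; simp only [hHb]; exact tendsto_const_nhds
    have hcont : ContinuousAt g x := by
      have := hg.continuousOn_interior
      rw [interior_Icc] at this
      exact this.continuousAt (Ioo_mem_nhds hax hxb)
    rw [Metric.tendsto_atTop]
    intro ε hε
    obtain ⟨η, hη, hball⟩ := Metric.continuousAt_iff.1 hcont ε hε
    obtain ⟨N, hN⟩ := exists_nat_gt ((b - a) / η)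
    refine ⟨N, fun n hn => ?_⟩
    have hn1 : (0:ℝ) < ((n+1 : ℕ):ℝ) := by positivity
    set δ : ℝ := (b - a) / (n + 1 : ℕ) with hδ
    have hδ0 : 0 < δ := div_pos (by linarith) hn1
    have hδη : δ < η := by
      rw [hδ, div_lt_iff₀ hn1]
      rw [div_lt_iff₀ hη] at hN
      have : (N:ℝ) ≤ ((n+1:ℕ):ℝ) := by exact_mod_cast (by omega : N ≤ n + 1)
      nlinarith
    have hnδ : ((n+1 : ℕ):ℝ) * δ = b - a := by rw [hδ]; field_simp
    set k := ⌊(x - a) / δ⌋₊ with hk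
    have hk1 : (k:ℝ) ≤ (x - a) / δ := Nat.floor_le (div_nonneg (by linarith) hδ0.le)
    have hk2 : (x - a) / δ < k + 1 := Nat.lt_floor_add_one _
    rw [le_div_iff₀ hδ0] at hk1
    rw [div_lt_iff₀ hδ0] at hk2
    have hkn : k < n + 1 := by
      have : (k:ℝ) < ((n+1:ℕ):ℝ) := by
        by_contra hcon
        push Not at hcon
        nlinarith
      exact_mod_cast this
    have g1 : H n (a + k * δ) = g (a + k * δ) := hgrid n k hkn.le
    have g2 : H n (a + (k+1 : ℕ) * δ) = g (a + (k+1 : ℕ) * δ) := hgrid n (k+1) hkn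
    have m1 : H n x ≤ g (a + k * δ) := by rw [← g1]; exact hH n (by linarith)
    have m2 : g (a + (k+1 : ℕ) * δ) ≤ H n x := by
      rw [← g2]; exact hH n (by rw [Nat.cast_add, Nat.cast_one]; linarith)
    have b1 := hball (x := a + k * δ) (by rw [Real.dist_eq, abs_lt]; constructor <;> linarith)
    have b2 := hball (x := a + (k+1 : ℕ) * δ)
      (by rw [Real.dist_eq, abs_lt, Nat.cast_add, Nat.cast_one]; constructor <;> linarith)
    rw [Real.dist_eq, abs_lt] at b1 b2 ⊢
    constructor <;> linarith

lemma aux_sqrt (y : ℝ) : y ^ (1 / (2:ℝ)) = Real.sqrt y := (Real.sqrt_eq_rpow y).symm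

theorem stmt_10 (a b : ℝ) (hab : a < b)
    (F G : Measure ℝ) [IsProbabilityMeasure F] [IsProbabilityMeasure G]
    (hF : F (Icc a b)ᶜ = 0) (hG : G (Icc a b)ᶜ = 0)
    (himp : (∀ c ∈ Icc a b,
        (∫ x in a..c, ((∫ z in a..x, cdfR F z) - ∫ z in a..x, cdfR G z)) ≤ 0) →
      (∀ c ∈ Icc a b,
        (b - c) * ((∫ x in a..c, cdfR F x) - ∫ x in a..c, cdfR G x) +
          2 * ∫ x in a..c, ((∫ z in a..x, cdfR F z) - ∫ z in a..x, cdfR G z) ≤ 0)) :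
    (∀ c ∈ Icc a b,
        (∫ x in a..c, ((∫ z in a..x, cdfR F z) - ∫ z in a..x, cdfR G z)) ≤ 0) ↔
      ConcaveOrder 2 a b F G := by
  constructor
  · intro h2 u hu
    have h1 := himp h2
    have hK : ∀ c d : ℝ, c ∈ Icc a b → d ∈ Icc a b →
        ∫ x, max (c - x) 0 * max (d - x) 0 ∂F ≤ ∫ x, max (c - x) 0 * max (d - x) 0 ∂G := by
      intro c d hc hd
      rcases le_total c d with h | h
      · exact aux_K_le a b F G hF hG h2 h1 c d hc hd h
      · have := aux_K_le a b F G hF hG h2 h1 d c hd hc h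
        simpa only [mul_comm] using this
    obtain ⟨⟨M, hM⟩, hum, hmono, hv0, hconv⟩ := hu
    simp only [aux_sqrt] at hconv
    set g : ℝ → ℝ := fun x => Real.sqrt (u b - u x) with hgdef
    have hanti : AntitoneOn g (Icc a b) := by
      intro x hx y hy hxy
      exact Real.sqrt_le_sqrt (by linarith [hmono hx hy hxy])
    have hgb : g b = 0 := by simp [hgdef]
    choose w t hw ht hgrid using fun n : ℕ =>
      aux_interp a b hab g hconv hanti hgb (n+1) (Nat.succ_pos n)
    set H : ℕ → ℝ → ℝ := fun n x => ∑ i ∈ Finset.range (n+1), w n i * max (t n i - x) 0 with hHdef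
    have hHanti : ∀ n, Antitone (H n) := by
      intro n x y hxy
      refine Finset.sum_le_sum fun i hi => ?_
      exact mul_le_mul_of_nonneg_left (max_le_max (by linarith) le_rfl)
        (hw n i (Finset.mem_range.1 hi))
    obtain ⟨hbd, hlim⟩ := aux_approx a b hab g hconv hanti hgb H hHanti
      (fun n k hk => hgrid n k hk)
    have hint : ∀ (μ : Measure ℝ) [IsProbabilityMeasure μ], μ (Icc a b)ᶜ = 0 →
        Filter.Tendsto (fun n => ∫ x, H n x ^ 2 ∂μ) Filter.atTop (nhds (u b - ∫ x, u x ∂μ)) := by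
      intro μ _ hμ
      have hui : Integrable u μ := by
        refine Integrable.of_bound (C := M) hum.aestronglyMeasurable ?_
        filter_upwards [aux_supp hμ] with z hz using hM z hz
      have e : u b - ∫ x, u x ∂μ = ∫ x, g x ^ 2 ∂μ := by
        have : ∫ x, g x ^ 2 ∂μ = ∫ x, (u b - u x) ∂μ := by
          apply integral_congr_ae
          filter_upwards [aux_supp hμ] with z hz using Real.sq_sqrt (hv0 z hz)
        rw [this, integral_sub (integrable_const _) hui]
        simp
      rw [e]
      refine tendsto_integral_of_dominated_convergence (fun _ => g a ^ 2) ?_ (integrable_const _) ?_ ?_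
      · intro n
        exact (by simp only [hHdef]; fun_prop : Continuous fun x => H n x ^ 2).aestronglyMeasurable
      · intro n
        filter_upwards [aux_supp hμ] with z hz
        obtain ⟨h3, h4⟩ := hbd n z hz
        rw [Real.norm_eq_abs, abs_of_nonneg (by positivity)]
        exact pow_le_pow_left₀ h3 h4 2
      · filter_upwards [aux_supp hμ] with z hz using (hlim z hz).pow 2
    have := le_of_tendsto_of_tendsto' (hint F hF) (hint G hG)
      (fun n => aux_sum_le a b F G hF hG hK (n+1) (w n) (t n) (hw n) (ht n))
    linarith
  · intro h c hc
    rw [aux_D3 a b F G hF hG c hc.1]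
    have hub : max (c - b) 0 = 0 := max_eq_right (by linarith [hc.2])
    have hmem : MemI 2 a b (fun x => - max (c - x) 0 ^ 2) := by
      refine ⟨?_, by fun_prop, ?_, ?_, ?_⟩
      · obtain ⟨C, hC⟩ := (isCompact_Icc (a := a) (b := b)).exists_bound_of_continuousOn
          (by fun_prop : Continuous fun x : ℝ => - max (c - x) 0 ^ 2).continuousOn
        exact ⟨C, hC⟩
      · intro x _ y _ hxy
        have h5 : max (c - y) 0 ≤ max (c - x) 0 := max_le_max (by linarith) le_rfl
        have := pow_le_pow_left₀ (le_max_right _ _) h5 2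
        simpa using this
      · intro x _
        simp only [hub]
        have := sq_nonneg (max (c - x) 0)
        linarith
      · simp only [hub, aux_sqrt]
        have e : (fun x : ℝ => Real.sqrt (-0 ^ 2 - -max (c - x) 0 ^ 2)) =
            fun x => max (c - x) 0 := by
          ext x
          rw [show -(0:ℝ) ^ 2 - -max (c - x) 0 ^ 2 = max (c - x) 0 ^ 2 by ring]
          exact Real.sqrt_sq (le_max_right _ _)
        rw [e]
        refine ConvexOn.sup (f := fun x => c - x) (g := fun _ => (0:ℝ)) ?_ (convexOn_const _ (convex_Icc a b))
        exact (convexOn_const c (convex_Icc a b)).sub (concaveOn_id (convex_Icc a b))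
    have := h _ hmem
    rw [integral_neg, integral_neg] at this
    linarith
end
end

section
/- Let a < b be reals, let μ be a Borel probability measure on [a,b] with cumulative distribution function F, and let c₁, c₂ ∈ [a,b] with c₁ ≤ c₂. Then ∫_{[a,b]} max{c₁−x,0}·max{c₂−x,0} dμ(x) = (c₂−c₁)·∫_a^{c₁} F(x)dx + 2·∫_a^{c₁} (∫_a^x F(z)dz) dx. -/
open MeasureTheory Set

noncomputable section

theorem stmt11_swap (a c : ℝ) (hac : a ≤ c) (μ : Measure ℝ) [IsProbabilityMeasure μ]
    (g : ℝ → ℝ → ℝ) (hg : Measurable (Function.uncurry g)) (M : ℝ)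
    (hM : ∀ x ∈ Ioc a c, ∀ᵐ y ∂μ, |g x y| ≤ M) :
    ∫ x in a..c, ∫ y, g x y ∂μ = ∫ y, (∫ x in a..c, g x y) ∂μ := by
  simp only [intervalIntegral.integral_of_le hac]
  apply integral_integral_swap
  refine Integrable.of_bound (C := M) hg.aestronglyMeasurable ?_
  refine (Measure.ae_prod_iff_ae_ae ?_).2 ?_
  · exact measurableSet_le hg.norm measurable_const
  · filter_upwards [ae_restrict_mem measurableSet_Ioc] with x hx
    exact hM x hx

theorem stmt11_lin (a c y : ℝ) (hac : a ≤ c) (hy : a ≤ y) :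
    ∫ x in a..c, max (x - y) 0 = (max (c - y) 0) ^ 2 / 2 := by
  have hI : ∀ u v : ℝ, IntervalIntegrable (fun x => max (x - y) 0) volume u v :=
    fun u v => (by fun_prop : Continuous fun x : ℝ => max (x - y) 0).intervalIntegrable u v
  have h0 : ∀ d, a ≤ d → d ≤ y → ∫ x in a..d, max (x - y) 0 = 0 := by
    intro d had hd
    rw [intervalIntegral.integral_congr (g := fun _ => (0:ℝ))]
    · simp
    · intro x hx
      rw [uIcc_of_le had] at hx
      simp; linarith [hx.2]
  rcases le_total c y with h | h
  · rw [h0 c hac h, max_eq_right (by linarith)]; simp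
  · rw [← intervalIntegral.integral_add_adjacent_intervals (hI a y) (hI y c), h0 y hy le_rfl,
      max_eq_left (by linarith),
      intervalIntegral.integral_congr (g := fun x => x - y)]
    · rw [intervalIntegral.integral_sub (by simp) (by simp)]
      simp; ring
    · intro x hx
      rw [uIcc_of_le h] at hx
      simp; linarith [hx.1]

theorem stmt11_ind' (a c y : ℝ) (hac : a ≤ c) (hy : a ≤ y) :
    ∫ x in a..c, (if y ≤ x then (1:ℝ) else 0) = max (c - y) 0 := by
  have h0 : ∀ d, a ≤ d → d ≤ y → 
      IntervalIntegrable (fun x => if y ≤ x then (1:ℝ) else 0) volume a d ∧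
      ∫ x in a..d, (if y ≤ x then (1:ℝ) else 0) = 0 := by
    intro d had hd
    have : ∀ x ∈ Ioo a d, (if y ≤ x then (1:ℝ) else 0) = 0 := by
      intro x hx
      rw [if_neg]; linarith [hx.2]
    have hae : ∀ᵐ x, x ∈ uIoc a d → (if y ≤ x then (1:ℝ) else 0) = 0 := by
      rw [uIoc_of_le had]
      have := (Measure.ae_ne volume d)
      filter_upwards [this] with x hx hx'
      rw [if_neg]; have := lt_of_le_of_ne hx'.2 hx; linarith
    constructor
    · refine IntervalIntegrable.congr_ae (f := fun _ => (0:ℝ)) (by simp) ?_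
      rw [Filter.EventuallyEq, ae_restrict_iff' measurableSet_uIoc]
      filter_upwards [hae] with x hx h; exact (hx h).symm
    · rw [intervalIntegral.integral_congr_ae (g := fun _ => (0:ℝ)) hae]
      simp
  rcases le_total c y with h | h
  · rw [(h0 c hac h).2, max_eq_right (by linarith)]
  · have h1 : ∀ x ∈ uIcc y c, (if y ≤ x then (1:ℝ) else 0) = 1 := by
      intro x hx
      rw [uIcc_of_le h] at hx
      exact if_pos hx.1
    have hi : IntervalIntegrable (fun x => if y ≤ x then (1:ℝ) else 0) volume y c := by
      refine IntervalIntegrable.congr (f := fun _ => (1:ℝ)) ?_ (by simp)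
      intro x hx
      exact (h1 x (uIoc_subset_uIcc hx)).symm
    rw [← intervalIntegral.integral_add_adjacent_intervals (h0 y hy le_rfl).1 hi,
      (h0 y hy le_rfl).2, max_eq_left (by linarith),
      intervalIntegral.integral_congr (g := fun _ => (1:ℝ)) h1]
    simp

theorem stmt_11 (a b : ℝ) (hab : a < b) (μ : Measure ℝ) [IsProbabilityMeasure μ]
    (hμ : μ (Icc a b)ᶜ = 0) (c₁ c₂ : ℝ) (hc₁ : c₁ ∈ Icc a b) (hc₂ : c₂ ∈ Icc a b)
    (hc : c₁ ≤ c₂) :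
    ∫ x in Icc a b, max (c₁ - x) 0 * max (c₂ - x) 0 ∂μ =
      (c₂ - c₁) * (∫ x in a..c₁, cdfR μ x) +
        2 * ∫ x in a..c₁, ∫ z in a..x, cdfR μ z := by
  have hae : ∀ᵐ y ∂μ, y ∈ Icc a b := hμ
  rw [Measure.restrict_eq_self_of_ae_mem hae]
  have hF : ∀ x, cdfR μ x = ∫ y, (if y ≤ x then (1:ℝ) else 0) ∂μ := by
    intro x
    have h : (fun y => if y ≤ x then (1:ℝ) else 0) = (Iic x).indicator (fun _ => 1) := by
      ext y; simp [indicator]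
    rw [h, integral_indicator measurableSet_Iic]
    simp [cdfR, Measure.real]
  have hG : ∀ c, a ≤ c → ∫ x in a..c, cdfR μ x = ∫ y, max (c - y) 0 ∂μ := by
    intro c hac
    simp only [hF]
    rw [stmt11_swap a c hac μ (fun x y => if y ≤ x then (1:ℝ) else 0) ?_ 1]
    · apply integral_congr_ae
      filter_upwards [hae] with y hy
      exact stmt11_ind' a c y hac hy.1
    · intro x _
      filter_upwards with y
      split_ifs <;> simp
    · exact Measurable.ite (measurableSet_le measurable_snd measurable_fst)
        measurable_const measurable_const
  have hb : ∀ x, x ≤ b → ∀ᵐ y ∂μ, |max (x - y) 0| ≤ b - a := by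
    intro x hx
    filter_upwards [hae] with y hy
    rw [abs_of_nonneg (le_max_right _ _)]
    exact max_le (by linarith [hy.1]) (by linarith)
  have hGG : ∫ x in a..c₁, ∫ z in a..x, cdfR μ z = ∫ y, (max (c₁ - y) 0) ^ 2 / 2 ∂μ := by
    rw [intervalIntegral.integral_congr (g := fun x => ∫ y, max (x - y) 0 ∂μ)]
    · rw [stmt11_swap a c₁ hc₁.1 μ (fun x y => max (x - y) 0) ?_ (b - a)]
      · apply integral_congr_ae
        filter_upwards [hae] with y hy
        exact stmt11_lin a c₁ y hc₁.1 hy.1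
      · intro x hx
        exact hb x (hx.2.trans hc₁.2)
      · exact (measurable_fst.sub measurable_snd).max measurable_const
    · intro x hx
      rw [uIcc_of_le hc₁.1] at hx
      exact hG x hx.1
  rw [hG c₁ hc₁.1, hGG, ← integral_const_mul, ← integral_const_mul, ← integral_add]
  · apply integral_congr_ae
    filter_upwards with y
    rcases le_total c₁ y with h | h
    · simp [max_eq_right (sub_nonpos.2 h)]
    · rw [max_eq_left (sub_nonneg.2 h), max_eq_left (by linarith)]
      ring
  · exact (Integrable.of_bound (C := b - a) (by fun_prop) (hb c₁ hc₁.2)).const_mul _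
  · refine (Integrable.of_bound (C := (b - a) ^ 2 / 2) (by fun_prop) ?_).const_mul _
    filter_upwards [hb c₁ hc₁.2] with y hy
    rw [Real.norm_eq_abs, abs_div, abs_pow, abs_two]
    gcongr
end
end

section
/- Let a < b be reals and let u : [a,b] → ℝ be continuous, convex, weakly decreasing, with u(b) = 0. Then for every ε > 0 there exist a positive integer m, nonnegative reals γ₁,…,γ_m, and points c₁,…,c_m ∈ [a,b] such that sup_{x ∈ [a,b]} |u(x) − ∑_{j=1}^m γ_j·max{c_j − x, 0}| ≤ ε. That is, u is the uniform limit of a sequence of nonnegative linear combinations of functions of the form x ↦ max{c − x, 0} with c ∈ [a,b]. -/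
open MeasureTheory Set

noncomputable section

def gam (w : ℕ → ℝ) (h : ℝ) : ℕ → ℝ
  | 0 => (w 1 - w 0) / h
  | k + 1 => (w (k + 2) - 2 * w (k + 1) + w k) / h

lemma gam_sum (w : ℕ → ℝ) (h : ℝ) (N : ℕ) :
    ∑ k ∈ Finset.range (N + 1), gam w h k = (w (N + 1) - w N) / h := by
  induction N with
  | zero => simp [gam]
  | succ N ih =>
    rw [Finset.sum_range_succ, ih]
    simp only [gam]
    ring

lemma gam_sum2 (w : ℕ → ℝ) (h : ℝ) (hh : 0 < h) (N : ℕ) :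
    ∑ k ∈ Finset.range N, gam w h k * (((N : ℝ) - k) * h) = w N - w 0 := by
  induction N with
  | zero => simp
  | succ N ih =>
    have h1 : ∑ k ∈ Finset.range (N + 1), gam w h k * ((((N + 1 : ℕ) : ℝ) - k) * h)
        = ∑ k ∈ Finset.range (N + 1), gam w h k * (((N : ℝ) - k) * h)
          + (∑ k ∈ Finset.range (N + 1), gam w h k) * h := by
      rw [Finset.sum_mul, ← Finset.sum_add_distrib]
      refine Finset.sum_congr rfl fun k _ => ?_
      push_cast
      ring
    rw [h1, gam_sum, Finset.sum_range_succ, ih]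
    field_simp
    ring

lemma gam_sum3 (w : ℕ → ℝ) (h b : ℝ) (hh : 0 < h) (n j : ℕ) (hj : j ≤ n) :
    ∑ k ∈ Finset.range n, gam w h k * max ((b - k * h) - (b - j * h)) 0 = w j - w 0 := by
  rw [← gam_sum2 w h hh j]
  symm
  have hs : Finset.range j ⊆ Finset.range n := by
    intro k; simp only [Finset.mem_range]; omega
  have h1 : ∀ k ∈ Finset.range j, gam w h k * (((j : ℝ) - k) * h)
      = gam w h k * max ((b - k * h) - (b - j * h)) 0 := by
    intro k hk
    have : (k : ℝ) ≤ j := by exact_mod_cast (Finset.mem_range.1 hk).le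
    rw [max_eq_left (by nlinarith)]
    ring
  rw [Finset.sum_congr rfl h1]
  refine Finset.sum_subset hs fun k _ hk => ?_
  have : (j : ℝ) ≤ k := by exact_mod_cast not_lt.1 (fun h => hk (Finset.mem_range.2 h))
  rw [max_eq_right (by nlinarith), mul_zero]

theorem stmt_13 (a b : ℝ) (hab : a < b) (u : ℝ → ℝ)
    (hcont : ContinuousOn u (Icc a b)) (hconv : ConvexOn ℝ (Icc a b) u)
    (hdec : AntitoneOn u (Icc a b)) (hub : u b = 0) :
    ∀ ε > (0:ℝ), ∃ m : ℕ, 0 < m ∧ ∃ γ c : Fin m → ℝ,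
      (∀ j, 0 ≤ γ j) ∧ (∀ j, c j ∈ Icc a b) ∧
      ∀ x ∈ Icc a b, |u x - ∑ j, γ j * max (c j - x) 0| ≤ ε := by
  intro ε hε
  have huc := isCompact_Icc.uniformContinuousOn_of_continuous hcont
  obtain ⟨δ, hδ, hd⟩ := Metric.uniformContinuousOn_iff.1 huc ε hε
  obtain ⟨n, hn⟩ := exists_nat_gt ((b - a) / δ)
  have hba : 0 < b - a := sub_pos.2 hab
  have hn0 : (0 : ℝ) < n := lt_trans (by positivity) hn
  have hnpos : 0 < n := by exact_mod_cast hn0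
  obtain ⟨h, hh⟩ : ∃ h, h = (b - a) / n := ⟨_, rfl⟩
  have hpos : 0 < h := by rw [hh]; positivity
  have hnh : n * h = b - a := by rw [hh]; field_simp
  have hlt : h < δ := by
    rw [hh, div_lt_iff₀ hn0]
    rw [div_lt_iff₀ hδ] at hn
    linarith
  have hmem : ∀ k : ℕ, k ≤ n → b - k * h ∈ Icc a b := by
    intro k hk
    have : (k : ℝ) ≤ n := by exact_mod_cast hk
    have h0 : (0 : ℝ) ≤ k := k.cast_nonneg
    constructor <;> nlinarith
  obtain ⟨w, hw⟩ : ∃ w : ℕ → ℝ, w = fun k : ℕ => u (b - (k : ℝ) * h) := ⟨_, rfl⟩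
  have hw0 : w 0 = 0 := by simp [hw, hub]
  have hγ : ∀ k < n, 0 ≤ gam w h k := by
    intro k hk
    cases k with
    | zero =>
      have : w 0 ≤ w 1 := by
        rw [hw]
        exact hdec (hmem 1 hk) (hmem 0 hnpos.le) (by push_cast; linarith)
      simp only [gam]
      exact div_nonneg (by linarith) hpos.le
    | succ k =>
      have := hconv.2 (hmem k (by omega)) (hmem (k + 2) (by omega))
        (show (0 : ℝ) ≤ 1 / 2 by norm_num) (show (0 : ℝ) ≤ 1 / 2 by norm_num) (by norm_num)
      have e : (1 / 2 : ℝ) • (b - k * h) + (1 / 2 : ℝ) • (b - (k + 2 : ℕ) * h)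
          = b - (k + 1 : ℕ) * h := by
        simp only [smul_eq_mul]; push_cast; ring
      rw [e] at this
      simp only [smul_eq_mul] at this
      simp only [gam]
      refine div_nonneg ?_ hpos.le
      simp only [hw]
      linarith
  obtain ⟨g, hg⟩ : ∃ g : ℝ → ℝ, g = fun x =>
    ∑ k ∈ Finset.range n, gam w h k * max ((b - k * h) - x) 0 := ⟨_, rfl⟩
  have hganti : Antitone g := by
    intro x y hxy
    simp only [hg]
    refine Finset.sum_le_sum fun k hk => ?_
    refine mul_le_mul_of_nonneg_left ?_ (hγ k (Finset.mem_range.1 hk))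
    exact max_le_max (by linarith) le_rfl
  have hgn : ∀ j ≤ n, g (b - j * h) = u (b - j * h) := by
    intro j hj
    have := gam_sum3 w h b hpos n j hj
    simp only [hg]
    rw [this, hw0, hw, sub_zero]
  refine ⟨n, hnpos, fun k => gam w h k, fun k => b - (k : ℕ) * h, fun k => hγ k k.2,
    fun k => hmem k k.2.le, fun x hx => ?_⟩
  have hgx : ∑ j : Fin n, gam w h j * max ((b - (j : ℕ) * h) - x) 0 = g x := by
    rw [hg]
    exact Fin.sum_univ_eq_sum_range (fun k => gam w h k * max ((b - k * h) - x) 0) n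
  rw [hgx]
  have ht : 0 ≤ (b - x) / h := div_nonneg (by linarith [hx.2]) hpos.le
  obtain ⟨j, hj⟩ : ∃ j, j = ⌊(b - x) / h⌋₊ := ⟨_, rfl⟩
  have h1 : (j : ℝ) ≤ (b - x) / h := hj ▸ Nat.floor_le ht
  have h2 : (b - x) / h < j + 1 := hj ▸ Nat.lt_floor_add_one _
  rw [le_div_iff₀ hpos] at h1
  rw [div_lt_iff₀ hpos] at h2
  by_cases hjn : j < n
  · have m1 := hmem j hjn.le
    have m2 := hmem (j + 1) hjn
    have g1 := hgn j hjn.le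
    have g2 := hgn (j + 1) hjn
    have l1 : x ≤ b - j * h := by linarith
    have l2 : b - (j + 1 : ℕ) * h ≤ x := by push_cast; linarith
    have a1 := hdec hx m1 l1
    have a2 := hdec m2 hx l2
    have b1 := hganti l1
    have b2 := hganti l2
    have hc := hd _ m2 _ m1 (by
      rw [Real.dist_eq, abs_lt]; push_cast; constructor <;> linarith)
    rw [Real.dist_eq, abs_lt] at hc
    rw [abs_le]
    constructor <;> linarith [hc.1, hc.2]
  · have hjn' : (n : ℝ) ≤ j := by exact_mod_cast not_lt.1 hjn
    have hxa : x = b - n * h := by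
      have : (n : ℝ) * h ≤ j * h := mul_le_mul_of_nonneg_right hjn' hpos.le
      linarith [hx.1]
    rw [hxa, hgn n le_rfl, sub_self, abs_zero]
    exact hε.le
end
end

section
/- Let x₁ ≤ x₂ ≤ x₃ ≤ x₄ be reals with x₁ < x₄, and let p, q ∈ [0,1]. Let μ_X = p·δ_{x₁} + (1−p)·δ_{x₃} and μ_Y = q·δ_{x₂} + (1−q)·δ_{x₄} (mixtures of Dirac measures). Assume p·x₁ + (1−p)·x₃ ≥ q·x₂ + (1−q)·x₄, i.e., the mean of μ_X is at least the mean of μ_Y. Then μ_Y ⪰_{2,[x₁,x₄]-I} μ_X if and only if p·(x₄−x₁)² + (1−p)·(x₄−x₃)² ≥ q·(x₄−x₂)². -/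
open MeasureTheory Set

noncomputable section

lemma stmt_14_alg (a b c p q A B C : ℝ) (hc : 0 ≤ c) (hcb : c ≤ b) (hba : b ≤ a) (ha : 0 < a)
    (hp0 : 0 ≤ p) (hq0 : 0 ≤ q) (hca : c < a) (hA : 0 ≤ A) (hB : 0 ≤ B)
    (hC : 0 ≤ C) (hC0 : c = 0 → C = 0)
    (hm : p * a + (1 - p) * c ≤ q * b)
    (h2 : q * b ^ 2 ≤ p * a ^ 2 + (1 - p) * c ^ 2)
    (hB1 : (a - c) * B ≤ (b - c) * A + (a - b) * C)
    (hC1 : a * C ≤ c * A) :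
    q * B ^ 2 ≤ p * A ^ 2 + (1 - p) * C ^ 2 := by
  obtain ⟨k, hk0, hk, hkA⟩ : ∃ k, 0 ≤ k ∧ C = k * c ∧ k * a ≤ A := by
    rcases hc.eq_or_lt with h | h
    · exact ⟨0, le_rfl, by simp [hC0 h.symm], by simpa using hA⟩
    · refine ⟨C / c, by positivity, by field_simp, ?_⟩
      rw [div_mul_eq_mul_div, div_le_iff₀ h]; linarith
  obtain ⟨d, hd, rfl⟩ : ∃ d, 0 ≤ d ∧ A = k * a + d := ⟨A - k * a, by linarith, by ring⟩
  obtain ⟨l, hl⟩ : ∃ l, l * (a - c) = b - c :=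
    ⟨(b - c) / (a - c), by rw [div_mul_cancel₀]; linarith⟩
  have hac : 0 < a - c := by linarith
  have hl0 : 0 ≤ l := by
    by_contra h
    nlinarith
  have hBl : B ≤ k * b + l * d := by
    have : (a - c) * B ≤ (a - c) * (k * b + l * d) := by
      subst hk
      have e : (a - c) * (k * b + l * d) = (b - c) * (k * a + d) + (a - b) * (k * c) := by
        linear_combination d * hl
      linarith
    exact le_of_mul_le_mul_left this hac
  have h3 : q * b * l ≤ p * a := by
    have : (a - c) * (q * b * l) ≤ (a - c) * (p * a) := by
      have e : (a - c) * (q * b * l) = q * b ^ 2 - c * (q * b) := by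
        linear_combination q * b * hl
      have := mul_le_mul_of_nonneg_left hm hc
      nlinarith
    exact le_of_mul_le_mul_left this hac
  have hl1 : l ≤ 1 := by
    by_contra h
    nlinarith
  have hlb : l * a ≤ b := by nlinarith
  have h4 : q * l ^ 2 ≤ p := by
    have : a * (q * l ^ 2) ≤ a * p := by
      have := mul_le_mul_of_nonneg_left hlb (mul_nonneg hq0 hl0)
      nlinarith
    exact le_of_mul_le_mul_left this ha
  have h5 : B ^ 2 ≤ (k * b + l * d) ^ 2 := by gcongr
  have h6 := mul_le_mul_of_nonneg_left h5 hq0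
  have h7 := mul_le_mul_of_nonneg_left h2 (sq_nonneg k)
  have h8 := mul_le_mul_of_nonneg_left h3 (mul_nonneg hk0 hd)
  have h9 := mul_le_mul_of_nonneg_left h4 (sq_nonneg d)
  subst hk
  nlinarith

lemma stmt_14_int (u : ℝ → ℝ) (hu : Measurable u) (p x y : ℝ) (hp : p ∈ Icc (0:ℝ) 1) :
    ∫ z, u z ∂(ENNReal.ofReal p • Measure.dirac x + ENNReal.ofReal (1 - p) • Measure.dirac y)
      = p * u x + (1 - p) * u y := by
  have hi : ∀ t : ℝ, Integrable u (Measure.dirac t) := fun t =>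
    integrable_dirac' hu.stronglyMeasurable (by simp)
  rw [integral_add_measure ((hi x).smul_measure ENNReal.ofReal_ne_top)
    ((hi y).smul_measure ENNReal.ofReal_ne_top), integral_smul_measure, integral_smul_measure,
    integral_dirac, integral_dirac, ENNReal.toReal_ofReal hp.1,
    ENNReal.toReal_ofReal (by linarith [hp.2])]
  simp

lemma stmt_14_conv {a b : ℝ} {w : ℝ → ℝ} (hw : ConvexOn ℝ (Icc a b) w) {x y z : ℝ}
    (hx : x ∈ Icc a b) (hz : z ∈ Icc a b) (hxy : x ≤ y) (hyz : y ≤ z) :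
    (z - x) * w y ≤ (z - y) * w x + (y - x) * w z := by
  rcases (hxy.trans hyz).eq_or_lt with h | h
  · obtain rfl : x = y := by linarith
    subst h; simp
  · have h0 : 0 < z - x := by linarith
    have n1 : 0 ≤ (z - y) / (z - x) := div_nonneg (by linarith) h0.le
    have n2 : 0 ≤ (y - x) / (z - x) := div_nonneg (by linarith) h0.le
    have := hw.2 hx hz n1 n2 (by field_simp; ring)
    simp only [smul_eq_mul] at this
    have e : (z - y) / (z - x) * x + (y - x) / (z - x) * z = y := by field_simp; ring
    rw [e] at this
    have h2 := mul_le_mul_of_nonneg_left this h0.le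
    have e2 : (z - x) * ((z - y) / (z - x) * w x + (y - x) / (z - x) * w z)
      = (z - y) * w x + (y - x) * w z := by field_simp
    linarith

theorem stmt_14 (x₁ x₂ x₃ x₄ p q : ℝ)
    (h12 : x₁ ≤ x₂) (h23 : x₂ ≤ x₃) (h34 : x₃ ≤ x₄) (h14 : x₁ < x₄)
    (hp : p ∈ Icc (0:ℝ) 1) (hq : q ∈ Icc (0:ℝ) 1)
    (hmean : q * x₂ + (1 - q) * x₄ ≤ p * x₁ + (1 - p) * x₃) :
    ConcaveOrder 2 x₁ x₄
        (ENNReal.ofReal q • Measure.dirac x₂ + ENNReal.ofReal (1 - q) • Measure.dirac x₄)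
        (ENNReal.ofReal p • Measure.dirac x₁ + ENNReal.ofReal (1 - p) • Measure.dirac x₃) ↔
      q * (x₄ - x₂) ^ 2 ≤ p * (x₄ - x₁) ^ 2 + (1 - p) * (x₄ - x₃) ^ 2 := by
  constructor
  · intro h
    have hu : Measurable (fun x : ℝ => -(x₄ - x) ^ 2) := by fun_prop
    have := h (fun x => -(x₄ - x) ^ 2) ⟨?_, hu, ?_, ?_, ?_⟩
    · rw [stmt_14_int _ hu _ _ _ hp, stmt_14_int _ hu _ _ _ hq] at this
      nlinarith
    · refine ⟨(x₄ - x₁) ^ 2, fun x hx => ?_⟩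
      rw [abs_neg, abs_of_nonneg (sq_nonneg _)]
      exact pow_le_pow_left₀ (by linarith [hx.2]) (by linarith [hx.1]) 2
    · intro x hx y hy hxy
      exact neg_le_neg (pow_le_pow_left₀ (by linarith [hy.2]) (by linarith) 2)
    · intro x hx
      simp only [sub_self]
      nlinarith [sq_nonneg (x₄ - x)]
    · have hc : ConvexOn ℝ (Icc x₁ x₄) (fun x : ℝ => x₄ - x) :=
        ⟨convex_Icc _ _, fun x _ y _ s t _ _ hst => by
          simp only [smul_eq_mul]
          have : x₄ = (s + t) * x₄ := by rw [hst, one_mul]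
          linarith⟩
      refine hc.congr fun x hx => ?_
      simp only [sub_self]
      rw [show -(0:ℝ) ^ 2 - -(x₄ - x) ^ 2 = (x₄ - x) ^ 2 by ring, ← Real.sqrt_eq_rpow,
        Real.sqrt_sq (by linarith [hx.2])]
  · intro h u hu
    obtain ⟨-, hum, humono, hnn, hcv⟩ := hu
    rw [stmt_14_int _ hum _ _ _ hp, stmt_14_int _ hum _ _ _ hq]
    have m1 : x₁ ∈ Icc x₁ x₄ := ⟨le_rfl, h14.le⟩
    have m2 : x₂ ∈ Icc x₁ x₄ := ⟨h12, h23.trans h34⟩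
    have m3 : x₃ ∈ Icc x₁ x₄ := ⟨h12.trans h23, h34⟩
    have m4 : x₄ ∈ Icc x₁ x₄ := ⟨h14.le, le_rfl⟩
    suffices hs : q * (u x₄ - u x₂) ≤ p * (u x₄ - u x₁) + (1 - p) * (u x₄ - u x₃) by linarith
    rcases (h12.trans h23).eq_or_lt with h13 | h13
    · obtain rfl : x₁ = x₂ := by linarith
      subst h13
      have := mul_le_mul_of_nonneg_right hq.2 (hnn _ m1)
      simp only at this
      linarith
    simp only [← Real.sqrt_eq_rpow] at hcv
    have c1 := stmt_14_conv hcv m1 m3 h12 h23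
    have c2 := stmt_14_conv hcv m1 m4 m3.1 h34
    simp only [sub_self, Real.sqrt_zero, mul_zero, add_zero] at c1 c2
    have key := stmt_14_alg (x₄ - x₁) (x₄ - x₂) (x₄ - x₃) p q
      (√(u x₄ - u x₁)) (√(u x₄ - u x₂)) (√(u x₄ - u x₃))
      (by linarith) (by linarith) (by linarith) (by linarith) hp.1 hq.1 (by linarith)
      (Real.sqrt_nonneg _) (Real.sqrt_nonneg _) (Real.sqrt_nonneg _)
      (fun h0 => by
        obtain rfl : x₄ = x₃ := by linarith
        simp)
      (by linarith) h (by ring_nf at c1 ⊢; linarith) c2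
    rwa [Real.sq_sqrt (hnn _ m1), Real.sq_sqrt (hnn _ m2), Real.sq_sqrt (hnn _ m3)] at key
end
end

section
/- Let a₁ < a₂ < b₂ < b₁ be reals with (a₁+b₁)/2 > (a₂+b₂)/2. Let G be the uniform probability distribution on [a₁,b₁] and F the uniform probability distribution on [a₂,b₂] (regarded as a measure on [a₁,b₁]). Then F ⪰_{2,[a₁,b₁]-I} G if and only if b₁ ≤ (3(a₂+b₂) − 2a₁ + √(a₂² + 10·a₂·b₂ + b₂² − 12·a₁·(a₂+b₂−a₁)))/4. -/
open MeasureTheory Set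

noncomputable section

/-- Integral against a normalized uniform measure. -/
lemma unif_integral (a b : ℝ) (h : a < b) (u : ℝ → ℝ) :
    ∫ x, u x ∂((ENNReal.ofReal (b - a))⁻¹ • volume.restrict (Icc a b))
      = (b - a)⁻¹ * ∫ x in a..b, u x := by
  rw [integral_smul_measure, integral_Icc_eq_integral_Ioc, intervalIntegral.integral_of_le h.le,
    ENNReal.toReal_inv, ENNReal.toReal_ofReal (by linarith), smul_eq_mul]

lemma chord (g : ℝ → ℝ) (a₁ a₂ b₂ b₁ : ℝ) (h1 : a₁ < a₂) (h2 : a₂ < b₂) (h3 : b₂ < b₁)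
    (hg : ConvexOn ℝ (Icc a₁ b₁) g) (hg0 : ∀ x ∈ Icc a₁ b₁, 0 ≤ g x) (hb : g b₁ = 0) :
    ∃ k c : ℝ, 0 ≤ k ∧ b₂ ≤ c ∧ c ≤ b₁ ∧ (∀ x ∈ Icc a₂ b₂, g x ≤ k * (c - x)) ∧
      (∀ x ∈ Icc a₁ a₂, k * (c - x) ≤ g x) ∧ (∀ x ∈ Icc b₂ b₁, k * (c - x) ≤ g x) := by
  have m2 : a₂ ∈ Icc a₁ b₁ := ⟨by linarith, by linarith⟩
  have n2 : b₂ ∈ Icc a₁ b₁ := ⟨by linarith, by linarith⟩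
  have n1 : b₁ ∈ Icc a₁ b₁ := ⟨by linarith, by linarith⟩
  have hw : 0 < b₂ - a₂ := by linarith
  obtain ⟨k, hk⟩ : ∃ k, k = (g a₂ - g b₂) / (b₂ - a₂) := ⟨_, rfl⟩
  have hka : g a₂ = g b₂ + k * (b₂ - a₂) := by rw [hk]; field_simp; ring
  have s : (g b₂ - g a₂) / (b₂ - a₂) = -k := by rw [hk]; ring
  -- chord bounds
  have B1 : ∀ x ∈ Icc b₂ b₁, g b₂ - k * (x - b₂) ≤ g x := by
    intro x hx
    rcases eq_or_lt_of_le hx.1 with h | h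
    · subst h; simp
    · have := hg.slope_mono_adjacent m2 (z := x) ⟨by linarith, hx.2⟩ h2 h
      rw [s, le_div_iff₀ (by linarith)] at this
      linarith
  have B2 : ∀ x ∈ Icc a₁ a₂, g b₂ - k * (x - b₂) ≤ g x := by
    intro x hx
    rcases eq_or_lt_of_le hx.2 with h | h
    · subst h; linarith
    · have := hg.slope_mono_adjacent (x := x) ⟨hx.1, by linarith [hx.2]⟩ n2 h h2
      rw [s, div_le_iff₀ (by linarith)] at this
      linarith
  have B3 : ∀ x ∈ Icc a₂ b₂, g x ≤ g b₂ - k * (x - b₂) := by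
    intro x hx
    rcases eq_or_lt_of_le hx.1 with h | h
    · subst h; linarith
    rcases eq_or_lt_of_le hx.2 with h' | h'
    · subst h'; simp
    · have := hg.slope_mono_adjacent m2 n2 h h'
      rw [div_le_div_iff₀ (by linarith) (by linarith)] at this
      have : (b₂ - a₂) * g x ≤ (b₂ - a₂) * (g b₂ - k * (x - b₂)) := by
        nlinarith
      exact le_of_mul_le_mul_left this hw
  have e1 := B1 b₁ ⟨h3.le, le_rfl⟩
  have p2 := hg0 b₂ n2
  rw [hb] at e1
  have hk0 : 0 ≤ k := by
    by_contra hneg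
    push Not at hneg
    nlinarith
  rcases eq_or_lt_of_le hk0 with h | h
  · subst h
    have : g b₂ = 0 := by linarith
    refine ⟨0, b₁, le_rfl, h3.le, le_rfl, ?_, ?_, ?_⟩
    · intro x hx; have := B3 x hx; linarith
    · intro x hx; have := B2 x hx; linarith
    · intro x hx; have := B1 x hx; linarith
  · have hc : ∀ x, k * (b₂ + g b₂ / k - x) = g b₂ - k * (x - b₂) := by
      intro x; field_simp; ring
    refine ⟨k, b₂ + g b₂ / k, hk0, ?_, ?_, ?_, ?_, ?_⟩
    · have : 0 ≤ g b₂ / k := by positivity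
      linarith
    · have : g b₂ / k ≤ b₁ - b₂ := by rw [div_le_iff₀ h]; linarith
      linarith
    · intro x hx; rw [hc]; exact B3 x hx
    · intro x hx; rw [hc]; exact B2 x hx
    · intro x hx; rw [hc]; exact B1 x hx

lemma int_sq (c s t : ℝ) : ∫ x in s..t, (c - x) ^ 2 = ((c - s) ^ 3 - (c - t) ^ 3) / 3 := by
  rw [intervalIntegral.integral_comp_sub_left (fun x => x ^ 2) c, integral_pow]
  norm_num

/-- The scalar inequality, with the left endpoint moved to the origin. -/
lemma poly (a b B c : ℝ) (h1 : 0 < a) (h2 : a < b) (h3 : b < B) (hc : b ≤ c) (hcB : c ≤ B)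
    (hP : 2 * B ^ 2 - 3 * (a + b) * B + (a ^ 2 + a * b + b ^ 2) ≤ 0) :
    B * ((c - a) ^ 3 - (c - b) ^ 3) ≤ c ^ 3 * (b - a) := by
  have hb : 0 < b := by linarith
  have hw : 0 < b - a := by linarith
  have hB : 0 < B := by linarith
  have E1 : B * (b - a) ^ 2 ≤ b ^ 3 := by
    by_contra hn
    push Not at hn
    have hw2 : 0 < (b - a) ^ 2 := by positivity
    -- Y = B w^2 > b^3
    obtain ⟨Y, hY⟩ : ∃ Y, Y = B * (b - a) ^ 2 := ⟨_, rfl⟩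
    rw [← hY] at hn
    have q : 2 * Y ^ 2 - 3 * (a + b) * (b - a) ^ 2 * Y
        + (a ^ 2 + a * b + b ^ 2) * (b - a) ^ 4 ≤ 0 := by
      have := mul_nonneg (neg_nonneg.2 hP) (by positivity : 0 ≤ (b - a) ^ 4)
      rw [hY]; nlinarith
    have q0 : 0 ≤ 2 * (b ^ 3) ^ 2 - 3 * (a + b) * (b - a) ^ 2 * b ^ 3
        + (a ^ 2 + a * b + b ^ 2) * (b - a) ^ 4 := by
      have : 2 * (b ^ 3) ^ 2 - 3 * (a + b) * (b - a) ^ 2 * b ^ 3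
        + (a ^ 2 + a * b + b ^ 2) * (b - a) ^ 4
        = a ^ 2 * (b ^ 4 + 5 * b ^ 3 * (b - a) + 3 * a ^ 2 * b * (b - a) + a ^ 4) := by ring
      rw [this]; positivity
    have q1 : 0 < 4 * b ^ 3 - 3 * (a + b) * (b - a) ^ 2 := by
      have : 4 * b ^ 3 - 3 * (a + b) * (b - a) ^ 2
        = b ^ 3 + 3 * a * b ^ 2 + 3 * a ^ 2 * (b - a) := by ring
      rw [this]; positivity
    nlinarith [mul_pos (sub_pos.2 hn) q1, mul_pos (sub_pos.2 hn) (sub_pos.2 hn)]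
  -- concavity in c
  have E2 : 0 ≤ B * (3 * (a + b) * B - 2 * B ^ 2 - (a ^ 2 + a * b + b ^ 2)) :=
    mul_nonneg hB.le (by linarith)
  have E3 : 0 ≤ c ^ 3 - B * (3 * c ^ 2 - 3 * (a + b) * c + (a ^ 2 + a * b + b ^ 2)) := by
    have t1 := mul_nonneg (sub_nonneg.2 hcB) (sub_nonneg.2 E1)
    have t2 := mul_nonneg (sub_nonneg.2 hc) E2
    have t3 : 0 ≤ (B - b) * ((c - b) * (B - c) * (2 * B - b - c)) := by
      refine mul_nonneg (by linarith) (mul_nonneg (mul_nonneg ?_ ?_) ?_) <;> linarith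
    have : 0 ≤ (B - b) *
      (c ^ 3 - B * (3 * c ^ 2 - 3 * (a + b) * c + (a ^ 2 + a * b + b ^ 2))) := by
      nlinarith
    exact nonneg_of_mul_nonneg_right this (by linarith)
  nlinarith [mul_nonneg E3 hw.le]

lemma root_iff (a₁ a₂ b₂ b₁ : ℝ) (h1 : a₁ < a₂) (h2 : a₂ < b₂)
    (hmid : (a₂ + b₂) / 2 < (a₁ + b₁) / 2) :
    b₁ ≤ (3 * (a₂ + b₂) - 2 * a₁ +
        Real.sqrt (a₂ ^ 2 + 10 * a₂ * b₂ + b₂ ^ 2 - 12 * a₁ * (a₂ + b₂ - a₁))) / 4 ↔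
    2 * (b₁ - a₁) ^ 2 - 3 * ((a₂ - a₁) + (b₂ - a₁)) * (b₁ - a₁) + ((a₂ - a₁) ^ 2
      + (a₂ - a₁) * (b₂ - a₁) + (b₂ - a₁) ^ 2) ≤ 0 := by
  have e : b₁ ≤ (3 * (a₂ + b₂) - 2 * a₁ +
        Real.sqrt (a₂ ^ 2 + 10 * a₂ * b₂ + b₂ ^ 2 - 12 * a₁ * (a₂ + b₂ - a₁))) / 4 ↔
      4 * b₁ - 3 * (a₂ + b₂) + 2 * a₁ ≤
        Real.sqrt (a₂ ^ 2 + 10 * a₂ * b₂ + b₂ ^ 2 - 12 * a₁ * (a₂ + b₂ - a₁)) := by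
    constructor <;> intro h <;> linarith
  rw [e, Real.le_sqrt' (by linarith)]
  constructor <;> intro h <;> nlinarith

lemma suff (a₁ a₂ b₂ b₁ : ℝ) (h1 : a₁ < a₂) (h2 : a₂ < b₂) (h3 : b₂ < b₁)
    (hP : 2 * (b₁ - a₁) ^ 2 - 3 * ((a₂ - a₁) + (b₂ - a₁)) * (b₁ - a₁) + ((a₂ - a₁) ^ 2
      + (a₂ - a₁) * (b₂ - a₁) + (b₂ - a₁) ^ 2) ≤ 0) (g : ℝ → ℝ)
    (hg : ConvexOn ℝ (Icc a₁ b₁) g) (hg0 : ∀ x ∈ Icc a₁ b₁, 0 ≤ g x) (hb : g b₁ = 0)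
    (hi : IntervalIntegrable (fun x => g x ^ 2) volume a₁ b₁) :
    (b₂ - a₂)⁻¹ * ∫ x in a₂..b₂, g x ^ 2 ≤ (b₁ - a₁)⁻¹ * ∫ x in a₁..b₁, g x ^ 2 := by
  obtain ⟨k, c, hk, hbc, hcb, B3, B2, B1⟩ := chord g a₁ a₂ b₂ b₁ h1 h2 h3 hg hg0 hb
  have hw : 0 < b₂ - a₂ := by linarith
  have hL : 0 < b₁ - a₁ := by linarith
  have sub : ∀ s t, a₁ ≤ s → s ≤ t → t ≤ b₁ →
      IntervalIntegrable (fun x => g x ^ 2) volume s t := by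
    intro s t hs hst ht
    apply hi.mono_set
    rw [uIcc_of_le hst, uIcc_of_le (by linarith)]
    exact Icc_subset_Icc hs ht
  have pi : ∀ s t, IntervalIntegrable (fun x => k ^ 2 * (c - x) ^ 2) volume s t := fun s t =>
    Continuous.intervalIntegrable (by fun_prop) s t
  have pv : ∀ s t, ∫ x in s..t, k ^ 2 * (c - x) ^ 2
      = k ^ 2 * (((c - s) ^ 3 - (c - t) ^ 3) / 3) := by
    intro s t
    rw [intervalIntegral.integral_const_mul, int_sq]
  -- three pieces
  have I1 : k ^ 2 * (((c - a₁) ^ 3 - (c - a₂) ^ 3) / 3) ≤ ∫ x in a₁..a₂, g x ^ 2 := by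
    rw [← pv]
    refine intervalIntegral.integral_mono_on h1.le (pi _ _)
      (sub _ _ le_rfl h1.le (by linarith)) ?_
    intro x hx
    rw [← mul_pow]
    exact pow_le_pow_left₀ (mul_nonneg hk (by linarith [hx.2])) (B2 x hx) 2
  have I2 : ∫ x in a₂..b₂, g x ^ 2 ≤ k ^ 2 * (((c - a₂) ^ 3 - (c - b₂) ^ 3) / 3) := by
    rw [← pv]
    refine intervalIntegral.integral_mono_on h2.le
      (sub _ _ h1.le h2.le (by linarith)) (pi _ _) ?_
    intro x hx
    rw [← mul_pow]
    exact pow_le_pow_left₀ (hg0 x ⟨by linarith [hx.1], by linarith [hx.2]⟩) (B3 x hx) 2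
  have I3 : k ^ 2 * (((c - b₂) ^ 3 - (c - c) ^ 3) / 3) ≤ ∫ x in b₂..c, g x ^ 2 := by
    rw [← pv]
    refine intervalIntegral.integral_mono_on hbc (pi _ _)
      (sub _ _ (by linarith) hbc hcb) ?_
    intro x hx
    rw [← mul_pow]
    exact pow_le_pow_left₀ (mul_nonneg hk (by linarith [hx.2])) (B1 x ⟨hx.1, by linarith [hx.2]⟩) 2
  have I4 : 0 ≤ ∫ x in c..b₁, g x ^ 2 :=
    intervalIntegral.integral_nonneg hcb (fun x _ => sq_nonneg _)
  have S1 := intervalIntegral.integral_add_adjacent_intervals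
    (sub a₁ a₂ le_rfl h1.le (by linarith)) (sub a₂ b₂ h1.le h2.le h3.le)
  have S2 := intervalIntegral.integral_add_adjacent_intervals
    (sub a₁ b₂ le_rfl (by linarith) h3.le) (sub b₂ c (by linarith) hbc hcb)
  have S3 := intervalIntegral.integral_add_adjacent_intervals
    (sub a₁ c le_rfl (by linarith) hcb) (sub c b₁ (by linarith) hcb le_rfl)
  have P := poly (a₂ - a₁) (b₂ - a₁) (b₁ - a₁) (c - a₁) (by linarith) (by linarith) (by linarith)
    (by linarith) (by linarith) hP
  simp only [sub_sub_sub_cancel_right] at P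
  have P' := mul_le_mul_of_nonneg_left P (sq_nonneg k)
  have T : 0 ≤ (b₁ - a₁ - (b₂ - a₂)) * (k ^ 2 * (((c - a₂) ^ 3 - (c - b₂) ^ 3) / 3)
      - ∫ x in a₂..b₂, g x ^ 2) := mul_nonneg (by linarith) (by linarith)
  have U : 0 ≤ (b₂ - a₂) * ((∫ x in a₁..b₁, g x ^ 2) - (∫ x in a₂..b₂, g x ^ 2)
    - k ^ 2 * (((c - a₁) ^ 3 - (c - a₂) ^ 3 + (c - b₂) ^ 3) / 3)) := by
    refine mul_nonneg hw.le ?_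
    rw [sub_self] at I3
    linarith
  rw [inv_mul_eq_div, inv_mul_eq_div, div_le_div_iff₀ hw hL]
  nlinarith

theorem stmt_15 (a₁ a₂ b₂ b₁ : ℝ) (h1 : a₁ < a₂) (h2 : a₂ < b₂) (h3 : b₂ < b₁)
    (hmid : (a₂ + b₂) / 2 < (a₁ + b₁) / 2) :
    ConcaveOrder 2 a₁ b₁
        ((ENNReal.ofReal (b₂ - a₂))⁻¹ • volume.restrict (Icc a₂ b₂))
        ((ENNReal.ofReal (b₁ - a₁))⁻¹ • volume.restrict (Icc a₁ b₁)) ↔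
      b₁ ≤ (3 * (a₂ + b₂) - 2 * a₁ +
        Real.sqrt (a₂ ^ 2 + 10 * a₂ * b₂ + b₂ ^ 2 - 12 * a₁ * (a₂ + b₂ - a₁))) / 4 := by
  have hw : 0 < b₂ - a₂ := by linarith
  have hL : 0 < b₁ - a₁ := by linarith
  have h4 : a₁ < b₁ := by linarith
  rw [root_iff a₁ a₂ b₂ b₁ h1 h2 hmid]
  constructor
  · intro H
    have := H (fun x => -(b₁ - x) ^ 2) ?_
    · rw [unif_integral _ _ h4, unif_integral _ _ h2, intervalIntegral.integral_neg,
        intervalIntegral.integral_neg, int_sq, int_sq, inv_mul_eq_div, inv_mul_eq_div,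
        div_le_div_iff₀ hL hw] at this
      by_contra hn
      push Not at hn
      nlinarith [mul_pos (mul_pos hn hw) hL]
    · refine ⟨⟨(b₁ - a₁) ^ 2, ?_⟩, by fun_prop, ?_, ?_, ?_⟩
      · intro x hx
        rw [abs_neg, abs_of_nonneg (sq_nonneg _)]
        exact pow_le_pow_left₀ (by linarith [hx.2]) (by linarith [hx.1]) 2
      · intro x hx y hy hxy
        have : (b₁ - y) ^ 2 ≤ (b₁ - x) ^ 2 :=
          pow_le_pow_left₀ (by linarith [hy.2]) (by linarith) 2
        simpa using this
      · intro x hx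
        have := sq_nonneg (b₁ - x)
        simp only; nlinarith
      · have : ConvexOn ℝ (Icc a₁ b₁) (fun x => b₁ - x) :=
          (convexOn_const _ (convex_Icc _ _)).sub (concaveOn_id (convex_Icc _ _))
        refine this.congr ?_
        intro x hx
        simp only
        rw [← Real.sqrt_eq_rpow]
        have e : -(b₁ - b₁) ^ 2 - -(b₁ - x) ^ 2 = (b₁ - x) ^ 2 := by ring
        rw [e, Real.sqrt_sq (by linarith [hx.2])]
  · intro hP u hu
    obtain ⟨⟨M, hM⟩, hmeas, -, h0, hconv⟩ := hu
    simp only [← Real.sqrt_eq_rpow] at hconv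
    have hui : IntervalIntegrable u volume a₁ b₁ := by
      rw [intervalIntegrable_iff_integrableOn_Ioc_of_le h4.le]
      refine Measure.integrableOn_of_bounded (M := M) (by simp) hmeas.aestronglyMeasurable ?_
      filter_upwards [ae_restrict_mem measurableSet_Ioc] with x hx
      exact hM x ⟨hx.1.le, hx.2⟩
    have hui2 : IntervalIntegrable u volume a₂ b₂ := by
      apply hui.mono_set
      rw [uIcc_of_le h2.le, uIcc_of_le h4.le]
      exact Icc_subset_Icc h1.le h3.le
    have sq : ∀ x ∈ Icc a₁ b₁, u b₁ - u x = Real.sqrt (u b₁ - u x) ^ 2 := fun x hx =>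
      (Real.sq_sqrt (h0 x hx)).symm
    have R := suff a₁ a₂ b₂ b₁ h1 h2 h3 hP _ hconv (fun x _ => Real.sqrt_nonneg _) (by simp) ?_
    · have c1 : ∫ x in a₁..b₁, Real.sqrt (u b₁ - u x) ^ 2 = ∫ x in a₁..b₁, (u b₁ - u x) := by
        refine intervalIntegral.integral_congr fun x hx => ?_
        rw [uIcc_of_le h4.le] at hx
        exact (sq x hx).symm
      have c2 : ∫ x in a₂..b₂, Real.sqrt (u b₁ - u x) ^ 2 = ∫ x in a₂..b₂, (u b₁ - u x) := by
        refine intervalIntegral.integral_congr fun x hx => ?_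
        rw [uIcc_of_le h2.le] at hx
        exact (sq x ⟨by linarith [hx.1], by linarith [hx.2]⟩).symm
      rw [c1, c2, intervalIntegral.integral_sub (by simp) hui,
        intervalIntegral.integral_sub (by simp) hui2, intervalIntegral.integral_const,
        intervalIntegral.integral_const, smul_eq_mul, smul_eq_mul, mul_sub, mul_sub,
        inv_mul_cancel_left₀ hw.ne', inv_mul_cancel_left₀ hL.ne'] at R
      rw [unif_integral _ _ h4, unif_integral _ _ h2]
      linarith
    · refine ((intervalIntegrable_const (c := u b₁)).sub hui).congr_ae ?_
      rw [uIoc_of_le h4.le]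
      filter_upwards [ae_restrict_mem measurableSet_Ioc] with x hx
      exact sq x ⟨hx.1.le, hx.2⟩
end
end

section
/- Let a < b be reals and let f : [a,b] → ℝ be a bounded measurable weakly decreasing function such that x ↦ f(x) − f(b) is 2-convex (i.e., x ↦ √(f(x) − f(b)) is convex on [a,b]); that is, f ∈ −I_{2,[a,b]}. Then for all real t ≥ 1/3 and all γ with 2/(3+√3) ≤ γ ≤ 1: f(γ·b + (1−γ)·a) ≤ (1/(b−a))·∫_a^b f(x) dx ≤ t·f(a) + (1−t)·f(b). (A Hermite–Hadamard type inequality for 2,[a,b]-convex decreasing functions.) -/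
open MeasureTheory Set

noncomputable section

lemma exists_supp_line (a b c : ℝ) (hac : a < c) (hcb : c < b) (g : ℝ → ℝ)
    (hg : ConvexOn ℝ (Icc a b) g) :
    ∃ k : ℝ, ∀ x ∈ Icc a b, g c + k * (x - c) ≤ g x := by
  obtain ⟨k, hk1, hk2⟩ := exists_between_of_forall_le
    (s := Set.image (fun y => (g c - g y) / (c - y)) (Ico a c))
    (t := Set.image (fun y => (g y - g c) / (y - c)) (Ioc c b))
    ⟨_, mem_image_of_mem _ ⟨le_refl a, hac⟩⟩ ⟨_, mem_image_of_mem _ ⟨hcb, le_refl b⟩⟩ (by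
      rintro _ ⟨y, hy, rfl⟩ _ ⟨z, hz, rfl⟩
      exact hg.slope_mono_adjacent ⟨hy.1, by linarith [hy.2]⟩ ⟨by linarith [hz.1], hz.2⟩ hy.2 hz.1)
  refine ⟨k, fun x hx => ?_⟩
  rcases lt_trichotomy x c with h | h | h
  · have := hk1 (mem_image_of_mem _ ⟨hx.1, h⟩)
    have h' : 0 < c - x := by linarith
    simp only [div_le_iff₀ h'] at this
    linarith
  · subst h; simp
  · have := hk2 (mem_image_of_mem _ ⟨h, hx.2⟩)
    have h' : 0 < x - c := by linarith
    simp only [le_div_iff₀ h'] at this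
    linarith

lemma integral_quad (K m p a c : ℝ) :
    ∫ x in a..c, (K + m ^ 2 * (p - x) ^ 2) =
      (c - a) * K + m ^ 2 * ((p - a) ^ 3 - (p - c) ^ 3) / 3 := by
  rw [intervalIntegral.integral_eq_sub_of_hasDerivAt
    (f := fun x => x * K - m ^ 2 * (p - x) ^ 3 / 3)]
  · ring
  · intro x _
    have h1 := ((((hasDerivAt_id x).const_sub p).pow 3).const_mul (m ^ 2)).div_const 3
    have h2 := ((hasDerivAt_id x).mul_const K).sub h1
    refine h2.congr_deriv ?_
    simp
    ring
  · exact Continuous.intervalIntegrable (by fun_prop) _ _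

theorem stmt_16 (a b : ℝ) (hab : a < b) (f : ℝ → ℝ)
    (hf : MemI 2 a b (fun x => -f x)) :
    ∀ t : ℝ, 1 / 3 ≤ t → ∀ γ : ℝ, 2 / (3 + Real.sqrt 3) ≤ γ → γ ≤ 1 →
      f (γ * b + (1 - γ) * a) ≤ (1 / (b - a)) * ∫ x in Icc a b, f x ∧
        (1 / (b - a)) * ∫ x in Icc a b, f x ≤ t * f a + (1 - t) * f b := by
  obtain ⟨-, -, hmono, hnn, hconv⟩ := hf
  have hanti : AntitoneOn f (Icc a b) := fun x hx y hy h => by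
    have := hmono hx hy h
    simpa using this
  obtain ⟨g, hgdef⟩ : ∃ g : ℝ → ℝ, g = fun x => (-f b - -f x) ^ ((1 : ℝ) / 2) := ⟨_, rfl⟩
  have hgc : ConvexOn ℝ (Icc a b) g := by rw [hgdef]; exact hconv
  have hg0 : ∀ x ∈ Icc a b, 0 ≤ g x := fun x hx => by
    rw [hgdef]; exact Real.rpow_nonneg (hnn x hx) _
  have hgf : ∀ x ∈ Icc a b, f x = f b + g x ^ 2 := fun x hx => by
    have h := hnn x hx
    simp only [hgdef]
    rw [← Real.sqrt_eq_rpow, Real.sq_sqrt h]; ring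
  have hgb : g b = 0 := by
    have := hgf b ⟨hab.le, le_refl b⟩
    have h2 : g b ^ 2 = 0 := by linarith
    exact pow_eq_zero_iff (two_ne_zero) |>.1 h2
  have hint : ∀ c d, a ≤ c → c ≤ d → d ≤ b → IntervalIntegrable f volume c d := by
    intro c d hc hcd hd
    apply AntitoneOn.intervalIntegrable
    rw [uIcc_of_le hcd]
    exact hanti.mono (Icc_subset_Icc hc hd)
  have hlow : ∀ c d, a ≤ c → c ≤ d → d ≤ b → (d - c) * f b ≤ ∫ x in c..d, f x := by
    intro c d hc hcd hd
    have : ∫ x in c..d, f b ≤ ∫ x in c..d, f x := by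
      apply intervalIntegral.integral_mono_on hcd (by simp) (hint c d hc hcd hd)
      intro x hx
      exact hanti ⟨hc.trans hx.1, hx.2.trans hd⟩ ⟨hab.le, le_refl b⟩ (hx.2.trans hd)
    simpa using this
  have hL : 0 < b - a := by linarith
  intro t ht γ hγ hγ1
  rw [integral_Icc_eq_integral_Ioc, ← intervalIntegral.integral_of_le hab.le, one_div,
    ← div_eq_inv_mul, le_div_iff₀ hL, div_le_iff₀ hL]
  constructor
  · obtain ⟨r, hr⟩ : ∃ r, r = Real.sqrt 3 := ⟨_, rfl⟩
    have hr2 : r ^ 2 = 3 := by rw [hr]; exact Real.sq_sqrt (by norm_num)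
    have hr0 : 0 ≤ r := by rw [hr]; exact Real.sqrt_nonneg _
    have hr1 : 1.7 < r := by nlinarith
    have hr3 : r < 1.8 := by nlinarith
    rw [← hr] at hγ
    have hγ0 : 1 - r / 3 ≤ γ := by
      refine le_trans (le_of_eq ?_) hγ
      rw [eq_div_iff (by linarith)]
      nlinarith
    obtain ⟨c, hc⟩ : ∃ c, c = b - (b - a) * (r / 3) := ⟨_, rfl⟩
    have hac : a < c := by nlinarith
    have hcb : c < b := by nlinarith
    have hcm : c ∈ Icc a b := ⟨hac.le, hcb.le⟩
    have hle : f (γ * b + (1 - γ) * a) ≤ f c := by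
      apply hanti hcm
      · constructor <;> nlinarith
      · nlinarith
    suffices h : f c * (b - a) ≤ ∫ x in a..b, f x from
      le_trans (mul_le_mul_of_nonneg_right hle hL.le) h
    rcases (hg0 c hcm).eq_or_lt with h0 | h0
    · rw [hgf c hcm, ← h0]
      have := hlow a b le_rfl hab.le le_rfl
      linarith
    · obtain ⟨k, hk⟩ := exists_supp_line a b c hac hcb g hgc
      obtain ⟨m, rfl⟩ : ∃ m, k = -m := ⟨-k, by ring⟩
      have hkb := hk b ⟨hab.le, le_rfl⟩
      rw [hgb] at hkb
      have hm : 0 < m := by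
        by_contra hm
        nlinarith
      obtain ⟨p, hp⟩ : ∃ p, p = c + g c / m := ⟨_, rfl⟩
      have hmp : g c = m * (p - c) := by rw [hp]; field_simp; ring
      have hcp : c < p := by rw [hp]; linarith [div_pos h0 hm]
      have hpb : p ≤ b := by
        by_contra h
        push Not at h
        nlinarith
      have h1 : ∫ x in a..p, (f b + m ^ 2 * (p - x) ^ 2) ≤ ∫ x in a..p, f x := by
        apply intervalIntegral.integral_mono_on (by linarith)
          (Continuous.intervalIntegrable (by fun_prop) _ _) (hint a p le_rfl (by linarith) hpb)
        intro x hx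
        have hxm : x ∈ Icc a b := ⟨hx.1, hx.2.trans hpb⟩
        have h2 := hk x hxm
        rw [hgf x hxm, ← mul_pow]
        have h3 : m * (p - x) ≤ g x := by rw [hmp] at h2; linarith
        have h4 : 0 ≤ m * (p - x) := mul_nonneg hm.le (by linarith [hx.2])
        have := pow_le_pow_left₀ h4 h3 2
        linarith
      rw [integral_quad] at h1
      have h2 := hlow p b (by linarith) hpb le_rfl
      have h3 := intervalIntegral.integral_add_adjacent_intervals
        (hint a p le_rfl (by linarith) hpb) (hint p b (by linarith) hpb le_rfl)
      rw [← h3, hgf c hcm, hmp]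
      have key : (p - c) ^ 2 * (b - a) ≤ (p - a) ^ 3 / 3 := by
        obtain ⟨D, hD⟩ : ∃ D, D = b - p := ⟨_, rfl⟩
        obtain ⟨L, hLd⟩ : ∃ L, L = b - a := ⟨_, rfl⟩
        have e1 : p - c = L * (r / 3) - D := by rw [hc, hD, hLd]; ring
        have e2 : p - a = L - D := by rw [hD, hLd]; ring
        rw [e1, e2, ← hLd]
        rw [← hLd] at hL
        have hD0 : 0 ≤ D := by linarith
        have hD1 : D ≤ L * (r / 3) := by linarith
        have hD2 : D ^ 2 ≤ L ^ 2 / 3 := by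
          have := pow_le_pow_left₀ hD0 hD1 2
          rw [mul_pow, div_pow, hr2] at this
          linarith
        have h5 : 0 ≤ D * ((2 * r - 3) * L ^ 2 - D ^ 2) := by
          apply mul_nonneg hD0
          nlinarith [sq_nonneg L]
        have e3 : (L - D) ^ 3 / 3 - (L * (r / 3) - D) ^ 2 * L =
            D * ((2 * r - 3) * L ^ 2 - D ^ 2) / 3 + (3 - r ^ 2) * L ^ 3 / 9 := by ring
        rw [hr2] at e3
        linarith
      have := mul_le_mul_of_nonneg_left key (sq_nonneg m)
      simp only [sub_self] at h1
      linarith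
  · have ham : a ∈ Icc a b := ⟨le_rfl, hab.le⟩
    have hbm : b ∈ Icc a b := ⟨hab.le, le_rfl⟩
    have h1 : ∫ x in a..b, f x ≤ ∫ x in a..b, (f b + (g a / (b - a)) ^ 2 * (b - x) ^ 2) := by
      apply intervalIntegral.integral_mono_on hab.le (hint a b le_rfl hab.le le_rfl)
        (Continuous.intervalIntegrable (by fun_prop) _ _)
      intro x hx
      rw [hgf x hx, ← mul_pow]
      have h2 : g x ≤ g a / (b - a) * (b - x) := by
        rcases hx.1.eq_or_lt with h | h
        · rw [← h, div_mul_cancel₀ _ hL.ne']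
        rcases hx.2.eq_or_lt with h' | h'
        · rw [h', hgb]; simp
        have := hgc.secant_mono_aux1 ham hbm h h'
        rw [hgb] at this
        rw [div_mul_eq_mul_div, le_div_iff₀ hL]
        linarith
      have := pow_le_pow_left₀ (hg0 x hx) h2 2
      linarith
    rw [integral_quad] at h1
    have e : (g a / (b - a)) ^ 2 * ((b - a) ^ 3 - (b - b) ^ 3) / 3 = g a ^ 2 * (b - a) / 3 := by
      field_simp
      ring
    rw [e] at h1
    rw [hgf a ham]
    have : 0 ≤ (t - 1 / 3) * (g a ^ 2 * (b - a)) :=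
      mul_nonneg (by linarith) (mul_nonneg (sq_nonneg _) hL.le)
    linarith
end
end

section
/- Let α > 1 be a real number, let a < b be reals, and let F and G be Borel probability measures on [a,b]. Suppose that ∫ u dF ≥ ∫ u dG for every weakly decreasing function u : [a,b] → ℝ₊ that is nonnegative and α-convex (i.e., u^(1/α) is convex). Then ∫ u dF ≥ ∫ u dG for every weakly decreasing, convex, twice differentiable function u : [a,b] → ℝ₊ with nonnegative values. -/
open MeasureTheory Set

noncomputable section

theorem aux_convex (α a b : ℝ) (hα : 1 < α) (u u' u'' : ℝ → ℝ)
    (h1 : ∀ x ∈ Icc a b, HasDerivWithinAt u (u' x) (Icc a b) x)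
    (h2 : ∀ x ∈ Icc a b, HasDerivWithinAt u' (u'' x) (Icc a b) x)
    (h0 : ∀ x ∈ Icc a b, 0 ≤ u x) (hc : ConvexOn ℝ (Icc a b) u) (ε : ℝ) (hε : 0 < ε) :
    ∃ K : ℝ, 0 ≤ K ∧
      ConvexOn ℝ (Icc a b) (fun x => (u x + ε * (b - x) ^ 2 + K) ^ (1 / α)) := by
  have hβ0 : 0 < 1 / α := by positivity
  have hβ1 : 1 / α < 1 := by rw [div_lt_one (by linarith)]; exact hα
  generalize 1 / α = β at hβ0 hβ1
  have hcont' : ContinuousOn u' (Icc a b) := fun x hx => (h2 x hx).continuousWithinAt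
  have hcont : ContinuousOn u (Icc a b) := fun x hx => (h1 x hx).continuousWithinAt
  have hv' : ContinuousOn (fun x => u' x - 2 * ε * (b - x)) (Icc a b) := by fun_prop
  obtain ⟨M, hM⟩ := isCompact_Icc.exists_bound_of_continuousOn hv'
  refine ⟨M ^ 2 / (2 * ε) + 1, by positivity, ?_⟩
  set K := M ^ 2 / (2 * ε) + 1 with hK
  have hK1 : 1 ≤ K := by rw [hK]; have : 0 ≤ M ^ 2 / (2 * ε) := by positivity
                         linarith
  have hKM : M ^ 2 ≤ 2 * ε * K := by
    rw [hK, mul_add, mul_div_cancel₀ _ (by positivity)]; linarith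
  have hvpos : ∀ x ∈ Icc a b, K ≤ u x + ε * (b - x) ^ 2 + K := fun x hx => by
    have := h0 x hx
    have : 0 ≤ ε * (b - x) ^ 2 := by positivity
    linarith
  have hmono : MonotoneOn u' (Ioo a b) := by
    intro x hx y hy hxy
    rcases hxy.eq_or_lt with rfl | hlt
    · exact le_rfl
    have hx' := Ioo_subset_Icc_self hx
    have hy' := Ioo_subset_Icc_self hy
    have A := hc.le_slope_of_hasDerivAt hx' hy' hlt ((h1 x hx').hasDerivAt (Icc_mem_nhds hx.1 hx.2))
    have B := hc.slope_le_of_hasDerivAt hx' hy' hlt ((h1 y hy').hasDerivAt (Icc_mem_nhds hy.1 hy.2))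
    exact A.trans B
  have hu'' : ∀ x ∈ Ioo a b, 0 ≤ u'' x := by
    intro x hx
    have hd := ((h2 x (Ioo_subset_Icc_self hx)).mono Ioo_subset_Icc_self)
    rw [← hd.derivWithin (isOpen_Ioo.uniqueDiffWithinAt hx)]
    exact hmono.derivWithin_nonneg
  refine convexOn_of_hasDerivWithinAt2_nonneg (convex_Icc a b)
    (f' := fun x => (u' x - 2 * ε * (b - x)) * β * (u x + ε * (b - x) ^ 2 + K) ^ (β - 1))
    (f'' := fun x => (u'' x + 2 * ε) * β * (u x + ε * (b - x) ^ 2 + K) ^ (β - 1) +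
      (u' x - 2 * ε * (b - x)) * β * ((u' x - 2 * ε * (b - x)) * (β - 1) *
        (u x + ε * (b - x) ^ 2 + K) ^ (β - 1 - 1))) ?_ ?_ ?_ ?_
  · refine ContinuousOn.rpow_const (by fun_prop) fun x hx => Or.inr hβ0.le
  all_goals
    rw [interior_Icc]
    intro x hx
    have hx' := Ioo_subset_Icc_self hx
    have hp : 0 < u x + ε * (b - x) ^ 2 + K := by linarith [hvpos x hx']
    have d1 := (h1 x hx').hasDerivAt (Icc_mem_nhds hx.1 hx.2)
    have d2 := (h2 x hx').hasDerivAt (Icc_mem_nhds hx.1 hx.2)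
    have db : HasDerivAt (fun x : ℝ => b - x) (-1) x := by
      simpa using (hasDerivAt_id x).const_sub b
    have dv : HasDerivAt (fun x => u x + ε * (b - x) ^ 2 + K) (u' x - 2 * ε * (b - x)) x := by
      refine HasDerivAt.congr_deriv ((d1.add ((db.pow 2).const_mul ε)).add_const K) ?_
      push_cast; ring
    have dv' : HasDerivAt (fun x => u' x - 2 * ε * (b - x)) (u'' x + 2 * ε) x := by
      refine HasDerivAt.congr_deriv (d2.sub (db.const_mul (2 * ε))) ?_
      ring
  · exact (dv.rpow_const (Or.inl hp.ne')).hasDerivWithinAt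
  · exact ((dv'.mul_const β).mul (dv.rpow_const (p := β - 1) (Or.inl hp.ne'))).hasDerivWithinAt
  · have hb := hM x hx'
    have hu := hu'' x hx
    have hv := hvpos x hx'
    beta_reduce
    generalize u' x - 2 * ε * (b - x) = d at *
    generalize u x + ε * (b - x) ^ 2 + K = v at *
    have e : v ^ (β - 1) = v ^ (β - 1 - 1) * v := by
      rw [← Real.rpow_add_one hp.ne']; congr 1; ring
    rw [e]
    have hd : d ^ 2 ≤ M ^ 2 := by
      rw [Real.norm_eq_abs] at hb
      rw [← sq_abs d]; gcongr
    have hkey : 0 ≤ (u'' x + 2 * ε) * v + d ^ 2 * (β - 1) := by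
      have : 0 ≤ u'' x * v := by positivity
      have : 2 * ε * K ≤ 2 * ε * v := by gcongr
      nlinarith [sq_nonneg d]
    have hr : 0 ≤ β * v ^ (β - 1 - 1) := by positivity
    have := mul_nonneg hr hkey
    linarith

theorem stmt_17 (α a b : ℝ) (hα : 1 < α) (hab : a < b)
    (F G : Measure ℝ) [IsProbabilityMeasure F] [IsProbabilityMeasure G]
    (hF : F (Icc a b)ᶜ = 0) (hG : G (Icc a b)ᶜ = 0)
    (h : ∀ u : ℝ → ℝ, AntitoneOn u (Icc a b) → (∀ x ∈ Icc a b, 0 ≤ u x) →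
      ConvexOn ℝ (Icc a b) (fun x => u x ^ (1 / α)) →
      ∫ x, u x ∂G ≤ ∫ x, u x ∂F) :
    ∀ u u' u'' : ℝ → ℝ,
      (∀ x ∈ Icc a b, HasDerivWithinAt u (u' x) (Icc a b) x) →
      (∀ x ∈ Icc a b, HasDerivWithinAt u' (u'' x) (Icc a b) x) →
      AntitoneOn u (Icc a b) → (∀ x ∈ Icc a b, 0 ≤ u x) →
      ConvexOn ℝ (Icc a b) u →
      ∫ x, u x ∂G ≤ ∫ x, u x ∂F := by
  intro u u' u'' h1 h2 ha h0 hc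
  have hcont : ContinuousOn u (Icc a b) := fun x hx => (h1 x hx).continuousWithinAt
  have key : ∀ μ : Measure ℝ, IsProbabilityMeasure μ → μ (Icc a b)ᶜ = 0 →
      ∀ f : ℝ → ℝ, ContinuousOn f (Icc a b) → Integrable f μ := by
    intro μ _ hμ f hf
    have : μ.restrict (Icc a b) = μ := Measure.restrict_eq_self_of_ae_mem (by
      rw [ae_iff]; exact hμ)
    rw [← this]
    exact hf.integrableOn_compact isCompact_Icc
  have hq : ContinuousOn (fun x : ℝ => (b - x) ^ 2) (Icc a b) := by fun_prop
  have step : ∀ ε : ℝ, 0 < ε → ∫ x, u x ∂G + ε * ∫ x, (b - x) ^ 2 ∂G ≤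
      ∫ x, u x ∂F + ε * ∫ x, (b - x) ^ 2 ∂F := by
    intro ε hε
    obtain ⟨K, hK, hconv⟩ := aux_convex α a b hα u u' u'' h1 h2 h0 hc ε hε
    have H := h (fun x => u x + ε * (b - x) ^ 2 + K) (by
      intro x hx y hy hxy
      have := ha hx hy hxy
      have h3 : (b - y) ^ 2 ≤ (b - x) ^ 2 := by
        have := hy.2
        gcongr
      have := mul_le_mul_of_nonneg_left h3 hε.le
      beta_reduce
      linarith) (by
      intro x hx
      have := h0 x hx
      positivity) hconv
    have E : ∀ μ : Measure ℝ, IsProbabilityMeasure μ → μ (Icc a b)ᶜ = 0 →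
        ∫ x, (u x + ε * (b - x) ^ 2 + K) ∂μ = ∫ x, u x ∂μ + ε * ∫ x, (b - x) ^ 2 ∂μ + K := by
      intro μ hp hμ
      have i1 := key μ hp hμ u hcont
      have i2 := (key μ hp hμ _ hq).const_mul ε
      have i3 : Integrable (fun x => u x + ε * (b - x) ^ 2) μ := i1.add i2
      rw [integral_add i3 (integrable_const K), integral_add i1 i2,
        integral_const_mul]
      simp
    rw [E G inferInstance hG, E F inferInstance hF] at H
    linarith
  by_contra hlt
  push Not at hlt
  set p := ∫ x, u x ∂G
  set q := ∫ x, u x ∂F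
  set r := ∫ x, (b - x) ^ 2 ∂G
  set s := ∫ x, (b - x) ^ 2 ∂F
  have hpos : 0 < |s - r| + 1 := by positivity
  have hs := step ((p - q) / (|s - r| + 1)) (div_pos (by linarith) hpos)
  have hm : (p - q) / (|s - r| + 1) * (|s - r| + 1) = p - q := by field_simp
  have he : 0 < (p - q) / (|s - r| + 1) := div_pos (by linarith) hpos
  have := mul_le_mul_of_nonneg_left (le_abs_self (s - r)) he.le
  linarith
end
end

section
/- Let a < b be reals and let F and G be Borel probability measures on [a,b]. Define AP_{2,[a,b]} as the set of twice continuously differentiable functions u : [a,b] → ℝ with u'(x) ≥ 0 and u''(x) ≤ 0 for all x, and u'(x) + u''(x)·(b−x) ≤ 0 for all x ∈ (a,b). Suppose that ∫ u dF ≥ ∫ u dG for every function u of the form u = v + w with v ∈ AP_{2,[a,b]} and w ∈ I_{2,[a,b]}. Then F ⪰_{2,[a,b]-S} G. -/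
open MeasureTheory Set

noncomputable section

/-- The set `AP_{2,[a,b]}`: twice continuously differentiable functions with `u' ≥ 0`,
`u'' ≤ 0` on `[a,b]`, and `u' + u''·(b−x) ≤ 0` on `(a,b)`. -/
def MemAP (a b : ℝ) (u : ℝ → ℝ) : Prop :=
  ∃ u' u'' : ℝ → ℝ,
    (∀ x ∈ Icc a b, HasDerivWithinAt u (u' x) (Icc a b) x) ∧
    (∀ x ∈ Icc a b, HasDerivWithinAt u' (u'' x) (Icc a b) x) ∧
    ContinuousOn u'' (Icc a b) ∧
    (∀ x ∈ Icc a b, 0 ≤ u' x) ∧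
    (∀ x ∈ Icc a b, u'' x ≤ 0) ∧
    (∀ x ∈ Ioo a b, u' x + u'' x * (b - x) ≤ 0)


lemma glue_deriv (f f' : ℝ → ℝ) (h0 : f 0 = 0) (h0' : f' 0 = 0)
    (hd : ∀ s, 0 ≤ s → HasDerivAt f (f' s) s) (s : ℝ) :
    HasDerivAt (fun t => f (max t 0)) (f' (max s 0)) s := by
  rcases lt_trichotomy s 0 with hs | hs | hs
  · rw [max_eq_right hs.le, h0']
    refine (hasDerivAt_const s (0:ℝ)).congr_of_eventuallyEq ?_
    filter_upwards [Iio_mem_nhds hs] with t ht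
    rw [max_eq_right (le_of_lt ht), h0]
  · subst hs
    rw [max_self, h0', ← hasDerivWithinAt_univ, ← Iic_union_Ici (a := (0:ℝ))]
    refine HasDerivWithinAt.union ?_ ?_
    · refine (hasDerivWithinAt_const (0:ℝ) (Iic 0) (0:ℝ)).congr ?_ ?_
      · intro t ht
        rw [max_eq_right ht, h0]
      · rw [max_self, h0]
    · have h1 := (hd 0 le_rfl).hasDerivWithinAt (s := Ici (0:ℝ))
      rw [h0'] at h1
      refine h1.congr ?_ ?_
      · intro t ht
        rw [max_eq_left ht]
      · rw [max_self]
  · rw [max_eq_left hs.le]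
    refine (hd s hs.le).congr_of_eventuallyEq ?_
    filter_upwards [Ioi_mem_nhds hs] with t ht
    rw [max_eq_left (le_of_lt ht)]

def rr (e s : ℝ) : ℝ := s ^ 3 / (s + e) ^ 2
def rr1 (e s : ℝ) : ℝ := s ^ 2 * (s + 3 * e) / (s + e) ^ 3
def rr2 (e s : ℝ) : ℝ := 6 * e ^ 2 * s / (s + e) ^ 4

lemma rr_deriv {e : ℝ} (he : 0 < e) (s : ℝ) (hs : 0 ≤ s) :
    HasDerivAt (rr e) (rr1 e s) s := by
  have hp : s + e ≠ 0 := by positivity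
  have h1 : HasDerivAt (fun s : ℝ => s + e) 1 s := (hasDerivAt_id s).add_const e
  have h2 := ((hasDerivAt_id s).pow 3).div (h1.pow 2) (pow_ne_zero 2 hp)
  refine (h2.congr_deriv ?_)
  simp only [rr1, id, Pi.pow_apply]
  field_simp
  push_cast
  ring

lemma rr1_deriv {e : ℝ} (he : 0 < e) (s : ℝ) (hs : 0 ≤ s) :
    HasDerivAt (rr1 e) (rr2 e s) s := by
  have hp : s + e ≠ 0 := by positivity
  have h1 : HasDerivAt (fun s : ℝ => s + e) 1 s := (hasDerivAt_id s).add_const e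
  have h3 : HasDerivAt (fun s : ℝ => s + 3 * e) 1 s := (hasDerivAt_id s).add_const (3 * e)
  have h2 := (((hasDerivAt_id s).pow 2).mul h3).div (h1.pow 3) (pow_ne_zero 3 hp)
  refine (h2.congr_deriv ?_)
  simp only [rr2, id, Pi.pow_apply, Pi.mul_apply]
  field_simp
  push_cast
  ring

lemma rr_nonneg {e s : ℝ} (he : 0 < e) (hs : 0 ≤ s) : 0 ≤ rr e s := by
  unfold rr; positivity
lemma rr1_nonneg {e s : ℝ} (he : 0 < e) (hs : 0 ≤ s) : 0 ≤ rr1 e s := by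
  unfold rr1; positivity
lemma rr2_nonneg {e s : ℝ} (he : 0 < e) (hs : 0 ≤ s) : 0 ≤ rr2 e s := by
  unfold rr2; positivity
lemma rr_le_mul {e s : ℝ} (he : 0 < e) (hs : 0 ≤ s) : rr e s ≤ s * rr1 e s := by
  have : s * rr1 e s - rr e s = 2 * e * s ^ 3 / (s + e) ^ 3 := by
    have hp : s + e ≠ 0 := by positivity
    unfold rr rr1; field_simp; ring
  have h2 : 0 ≤ 2 * e * s ^ 3 / (s + e) ^ 3 := by positivity
  linarith
lemma rr_le {e s : ℝ} (he : 0 < e) (hs : 0 ≤ s) : rr e s ≤ s := by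
  have : s - rr e s = s * e * (2 * s + e) / (s + e) ^ 2 := by
    have hp : s + e ≠ 0 := by positivity
    unfold rr; field_simp; ring
  have h2 : 0 ≤ s * e * (2 * s + e) / (s + e) ^ 2 := by positivity
  linarith
lemma le_rr {e s : ℝ} (he : 0 < e) (hs : 0 ≤ s) : s ≤ rr e s + 2 * e := by
  have : rr e s + 2 * e - s = e ^ 2 * (3 * s + 2 * e) / (s + e) ^ 2 := by
    have hp : s + e ≠ 0 := by positivity
    unfold rr; field_simp; ring
  have h2 : 0 ≤ e ^ 2 * (3 * s + 2 * e) / (s + e) ^ 2 := by positivity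
  linarith

def vv (e c d x : ℝ) : ℝ := - (rr e (max (c - x) 0) * (d - x))

lemma vv_cont {e : ℝ} (he : 0 < e) (c d : ℝ) : Continuous (vv e c d) := by
  unfold vv rr
  have : ∀ x : ℝ, (max (c - x) 0 + e) ^ 2 ≠ 0 := fun x => by positivity
  fun_prop (disch := assumption)

lemma vv_memAP {a b c d e : ℝ} (he : 0 < e) (hcd : c ≤ d) (hdb : d ≤ b) :
    MemAP a b (vv e c d) := by
  have key : ∀ x, max (c - x) 0 = 0 ∨ 0 ≤ c - x ∧ max (c - x) 0 = c - x := by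
    intro x
    rcases le_total (c - x) 0 with h | h
    · exact Or.inl (max_eq_right h)
    · exact Or.inr ⟨h, max_eq_left h⟩
  have z0 : rr e 0 = 0 := by simp [rr]
  have z1 : rr1 e 0 = 0 := by simp [rr1]
  have z2 : rr2 e 0 = 0 := by simp [rr2]
  have D0 : ∀ x, HasDerivAt (fun x => rr e (max (c - x) 0)) (-rr1 e (max (c - x) 0)) x := by
    intro x
    have := (glue_deriv (rr e) (rr1 e) z0 z1 (rr_deriv he) (c - x)).comp x
      ((hasDerivAt_id x).const_sub c)
    simpa [Function.comp_def] using this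
  have D1 : ∀ x, HasDerivAt (fun x => rr1 e (max (c - x) 0)) (-rr2 e (max (c - x) 0)) x := by
    intro x
    have := (glue_deriv (rr1 e) (rr2 e) z1 z2 (rr1_deriv he) (c - x)).comp x
      ((hasDerivAt_id x).const_sub c)
    simpa [Function.comp_def] using this
  have Dd : ∀ x, HasDerivAt (fun x : ℝ => d - x) (-1) x :=
    fun x => (hasDerivAt_id x).const_sub d
  refine ⟨fun x => rr1 e (max (c - x) 0) * (d - x) + rr e (max (c - x) 0),
    fun x => -(rr2 e (max (c - x) 0) * (d - x)) - 2 * rr1 e (max (c - x) 0), ?_, ?_, ?_, ?_, ?_, ?_⟩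
  · intro x _
    refine HasDerivAt.hasDerivWithinAt ?_
    exact ((D0 x).mul (Dd x)).neg.congr_deriv (by ring)
  · intro x _
    refine HasDerivAt.hasDerivWithinAt ?_
    exact (((D1 x).mul (Dd x)).add (D0 x)).congr_deriv (by ring)
  · unfold rr1 rr2
    have h3 : ∀ x : ℝ, (max (c - x) 0 + e) ^ 3 ≠ 0 := fun x => by positivity
    have h4 : ∀ x : ℝ, (max (c - x) 0 + e) ^ 4 ≠ 0 := fun x => by positivity
    refine Continuous.continuousOn ?_
    fun_prop (disch := assumption)
  · intro x _
    rcases key x with h | ⟨h, h'⟩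
    · simp [h, z0, z1]
    · simp only [h']
      have := mul_nonneg (rr1_nonneg he h) (by linarith : 0 ≤ d - x)
      have := rr_nonneg he h
      linarith
  · intro x _
    rcases key x with h | ⟨h, h'⟩
    · simp [h, z2, z1]
    · simp only [h']
      have := mul_nonneg (rr2_nonneg he h) (by linarith : 0 ≤ d - x)
      have := rr1_nonneg he h
      linarith
  · intro x _
    rcases key x with h | ⟨h, h'⟩
    · simp [h, z2, z1, z0]
    · simp only [h']
      have h1 := rr1_nonneg he h
      have h2 := rr2_nonneg he h
      have h3 := rr_le_mul he h
      have q : 0 ≤ d - x := by linarith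
      have B : 0 ≤ b - x := by linarith
      have t1 := mul_nonneg (mul_nonneg h2 q) B
      have t2 := mul_nonneg h1 (by linarith : 0 ≤ (b - x) - (d - x))
      have t3 := mul_nonneg h1 (by linarith : 0 ≤ (b - x) - (c - x))
      nlinarith

lemma zero_memI (a b : ℝ) : MemI 2 a b (fun _ => 0) := by
  refine ⟨⟨0, by simp⟩, measurable_const, fun _ _ _ _ _ => le_rfl, by simp, ?_⟩
  have : (fun x : ℝ => ((fun _ => (0:ℝ)) b - (fun _ => (0:ℝ)) x) ^ (1 / (2:ℝ))) =
      fun _ => (0:ℝ) := by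
    funext x
    norm_num
  rw [this]
  exact convexOn_const 0 (convex_Icc a b)

lemma integrable_of_cont {a b : ℝ} (F : Measure ℝ) [IsProbabilityMeasure F]
    (hF : F (Icc a b)ᶜ = 0) {f : ℝ → ℝ} (hf : Continuous f) : Integrable f F := by
  have h1 : F.restrict (Icc a b) = F := Measure.restrict_eq_self_of_ae_mem (mem_ae_iff.2 hF)
  rw [← h1]
  exact hf.continuousOn.integrableOn_compact isCompact_Icc

lemma main_ordered {a b : ℝ} (hab : a < b)
    (F G : Measure ℝ) [IsProbabilityMeasure F] [IsProbabilityMeasure G]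
    (hF : F (Icc a b)ᶜ = 0) (hG : G (Icc a b)ᶜ = 0)
    (h : ∀ v w : ℝ → ℝ, MemAP a b v → MemI 2 a b w →
      ∫ x, (v x + w x) ∂G ≤ ∫ x, (v x + w x) ∂F) {c d : ℝ} (hcd : c ≤ d) (hdb : d ≤ b) :
    ∫ x, max (c - x) 0 * max (d - x) 0 ∂F ≤ ∫ x, max (c - x) 0 * max (d - x) 0 ∂G := by
  have hψ : Continuous fun x : ℝ => max (c - x) 0 * max (d - x) 0 := by fun_prop
  refine le_of_forall_pos_le_add fun ε hε => ?_
  set e := ε / (2 * (b - a)) with he'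
  have hba : 0 < b - a := sub_pos.2 hab
  have he : 0 < e := by positivity
  have hee : 2 * e * (b - a) = ε := by rw [he']; field_simp
  have hv := h (vv e c d) (fun _ => 0) (vv_memAP he hcd hdb) (zero_memI a b)
  simp only [add_zero] at hv
  have iF := integrable_of_cont F hF (vv_cont he c d)
  have iG := integrable_of_cont G hG (vv_cont he c d)
  have A : ∫ x, max (c - x) 0 * max (d - x) 0 ∂F ≤ ∫ x, (ε - vv e c d x) ∂F := by
    refine integral_mono_ae (integrable_of_cont F hF hψ) ((integrable_const ε).sub iF) ?_
    filter_upwards [mem_ae_iff.2 hF] with x hx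
    simp only [vv]
    rcases le_total (c - x) 0 with h1 | h1
    · simp [max_eq_right h1, rr, hε.le]
    · rw [max_eq_left h1, max_eq_left (by linarith : 0 ≤ d - x)]
      have t1 := mul_le_mul_of_nonneg_right (le_rr he h1) (by linarith : 0 ≤ d - x)
      have t2 := mul_le_mul_of_nonneg_left (by linarith [hx.1] : d - x ≤ b - a)
        (by positivity : 0 ≤ 2 * e)
      linarith
  have B : ∫ x, - vv e c d x ∂G ≤ ∫ x, max (c - x) 0 * max (d - x) 0 ∂G := by
    refine integral_mono iG.neg (integrable_of_cont G hG hψ) fun x => ?_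
    simp only [vv, neg_neg]
    rcases le_total (c - x) 0 with h1 | h1
    · simp [max_eq_right h1, rr]
    · rw [max_eq_left h1, max_eq_left (by linarith : 0 ≤ d - x)]
      exact mul_le_mul_of_nonneg_right (rr_le he h1) (by linarith)
  rw [integral_sub (integrable_const ε) iF] at A
  rw [integral_neg] at B
  simp at A
  linarith

theorem stmt_18 (a b : ℝ) (hab : a < b)
    (F G : Measure ℝ) [IsProbabilityMeasure F] [IsProbabilityMeasure G]
    (hF : F (Icc a b)ᶜ = 0) (hG : G (Icc a b)ᶜ = 0)
    (h : ∀ v w : ℝ → ℝ, MemAP a b v → MemI 2 a b w →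
      ∫ x, (v x + w x) ∂G ≤ ∫ x, (v x + w x) ∂F) :
    SuffOrder 2 a b F G := by
  intro c hc
  simp only [Fin.prod_univ_two]
  rcases le_total (c 0) (c 1) with h1 | h1
  · exact main_ordered hab F G hF hG h h1 (hc 1).2
  · have := main_ordered hab F G hF hG h h1 (hc 0).2
    simpa only [mul_comm] using this
end
end
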